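/- There exists an absolute constant c ∈ ℕ such that the following holds for all n ≥ 1. Let g ∈ GL_n(ℚ) have entries of height at most h, where h ≥ 2, and suppose g = s·u = u·s where s ∈ GL_n(ℚ̄) is semisimple and u ∈ GL_n(ℚ̄) is unipotent (the multiplicative Jordan–Chevalley decomposition of g). Then the Zariski closure Zcl(⟨s⟩) of the cyclic subgroup generated by s is d-bounded over ℚ for d = n·⌈(c·n⁷·n!·log₂ h)^n⌉. -/

import Mathlib

noncomputable section

open scoped MatrixGroups
open MvPolynomial

/-- The field of algebraic numbers. -/
abbrev Qbar : Type := AlgebraicClosure ℚ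

/-- The zero set `V(I)` of a set `I` of multivariate polynomials over `ℚ̄`. -/
def zeroSet {σ : Type} (I : Set (MvPolynomial σ Qbar)) : Set (σ → Qbar) :=
  {a | ∀ f ∈ I, MvPolynomial.eval a f = 0}

/-- A subset of affine space over `ℚ̄` is an algebraic set if it is a zero set. -/
def IsAlgebraicSet {σ : Type} (X : Set (σ → Qbar)) : Prop :=
  ∃ I : Set (MvPolynomial σ Qbar), X = zeroSet I

/-- The Zariski closure: the smallest algebraic set containing `Y`. -/
def zariskiClosure {σ : Type} (Y : Set (σ → Qbar)) : Set (σ → Qbar) :=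
  zeroSet {f : MvPolynomial σ Qbar | ∀ a ∈ Y, MvPolynomial.eval a f = 0}

/-- `X` is `d`-bounded over `ℚ`: it is the zero set of a set of polynomials of total
degree at most `d` with rational coefficients. -/
def BoundedOverQ {σ : Type} (X : Set (σ → Qbar)) (d : ℕ) : Prop :=
  ∃ I : Set (MvPolynomial σ Qbar), X = zeroSet I ∧
    ∀ f ∈ I, f.totalDegree ≤ d ∧ ∀ m, f.coeff m ∈ Set.range (algebraMap ℚ Qbar)

/-- Coordinates for the affine space `ℚ̄^{n²+1}` in which `GL_n(ℚ̄)` is embedded. -/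
abbrev glIdx (n : ℕ) : Type := (Fin n × Fin n) ⊕ Unit

/-- The point `(M, det(M)⁻¹)` of `ℚ̄^{n²+1}` associated to `g ∈ GL_n(ℚ̄)`. -/
def glPoint {n : ℕ} (g : GL (Fin n) Qbar) : glIdx n → Qbar :=
  Sum.elim (fun p => (g : Matrix (Fin n) (Fin n) Qbar) p.1 p.2)
    (fun _ => ((g : Matrix (Fin n) (Fin n) Qbar).det)⁻¹)

/-- The matrix part of a point of `ℚ̄^{n²+1}`. -/
def pointMatrix {n : ℕ} (a : glIdx n → Qbar) : Matrix (Fin n) (Fin n) Qbar :=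
  Matrix.of fun i j => a (Sum.inl (i, j))

/-- The height of a rational number `a/b` in lowest terms is `max |a| b`. -/
def ratHeight (q : ℚ) : ℕ := max q.num.natAbs q.den

/-- `g` has rational entries, i.e. `g ∈ GL_n(ℚ)`. -/
def HasRatEntries {n : ℕ} (g : GL (Fin n) Qbar) : Prop :=
  ∀ i j, ∃ q : ℚ, (g : Matrix (Fin n) (Fin n) Qbar) i j = algebraMap ℚ Qbar q

/-- `g` has rational entries of height at most `h`. -/
def EntriesHeightLE {n : ℕ} (g : GL (Fin n) Qbar) (h : ℕ) : Prop :=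
  ∀ i j, ∃ q : ℚ, (g : Matrix (Fin n) (Fin n) Qbar) i j = algebraMap ℚ Qbar q ∧ ratHeight q ≤ h

/-- A matrix `g` is unipotent if `(g - 1)^n = 0`. -/
def IsUnipotent {n : ℕ} (g : GL (Fin n) Qbar) : Prop :=
  ((g : Matrix (Fin n) (Fin n) Qbar) - 1) ^ n = 0

/-- A matrix is semisimple if it is diagonalizable over `ℚ̄`. -/
def IsSemisimpleMat {n : ℕ} (M : Matrix (Fin n) (Fin n) Qbar) : Prop :=
  ∃ (P : GL (Fin n) Qbar) (dvec : Fin n → Qbar),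
    M = (P : Matrix (Fin n) (Fin n) Qbar) * Matrix.diagonal dvec *
      ((P⁻¹ : GL (Fin n) Qbar) : Matrix (Fin n) (Fin n) Qbar)

/-- Iterated base-2 exponentiation: `iexp 0 x = x`, `iexp (k+1) x = 2 ^ iexp k x`. -/
def iexp : ℕ → ℕ → ℕ
  | 0, x => x
  | k + 1, x => 2 ^ iexp k x



open scoped BigOperators

/-- Frobenius congruence for sums. -/
lemma sum_pow_prime_congr {R ι : Type*} [CommRing R] (s : Finset ι) (f : ι → R) {p : ℕ}
    (hp : p.Prime) : ∃ r : R, (∑ i ∈ s, f i) ^ p = ∑ i ∈ s, f i ^ p + p * r := by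
  classical
  induction s using Finset.induction_on with
  | empty => exact ⟨0, by simp [hp.ne_zero]⟩
  | insert a s ha ih =>
    obtain ⟨r, hr⟩ := ih
    obtain ⟨q, hq⟩ := exists_add_pow_prime_eq hp (f a) (∑ i ∈ s, f i)
    refine ⟨r + f a * (∑ i ∈ s, f i) * q, ?_⟩
    rw [Finset.sum_insert ha, Finset.sum_insert ha, hq, hr]
    ring

/-- Equal power sums force the values to agree. -/
lemma powersum_image {ι : Type*} [Fintype ι] (x : ι → ℂ) (p : ℕ)
    (h : ∀ j < 2 * Fintype.card ι, ∑ i, x i ^ j = ∑ i, (x i ^ p) ^ j) (i : ι) :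
    ∃ k, x k ^ p = x i := by
  classical
  by_contra hcon
  push Not at hcon
  let S : Finset ℂ := Finset.univ.image x ∪ Finset.univ.image (fun i => x i ^ p)
  have hS : S.card ≤ 2 * Fintype.card ι := by
    refine (Finset.card_union_le _ _).trans ?_
    have h1 := Finset.card_image_le (s := (Finset.univ : Finset ι)) (f := x)
    have h2 := Finset.card_image_le (s := (Finset.univ : Finset ι)) (f := fun i => x i ^ p)
    simp only [Finset.card_univ] at h1 h2
    omega
  let c : ℂ → ℂ := fun v => ((Finset.univ.filter (fun i => x i = v)).card : ℂ)
    - ((Finset.univ.filter (fun i => x i ^ p = v)).card : ℂ)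
  have key : ∀ j < 2 * Fintype.card ι, ∑ v ∈ S, c v * v ^ j = 0 := by
    intro j hj
    have e1 : ∑ i, x i ^ j = ∑ v ∈ S, ((Finset.univ.filter (fun i => x i = v)).card : ℂ) * v ^ j := by
      rw [← Finset.sum_fiberwise_of_maps_to (s := Finset.univ) (t := S) (g := x)]
      · refine Finset.sum_congr rfl fun v _ => ?_
        rw [Finset.sum_congr rfl (g := fun _ => v ^ j)]
        · simp
        · intro i hi
          rw [(Finset.mem_filter.1 hi).2]
      · intro i _
        exact Finset.mem_union_left _ (Finset.mem_image_of_mem _ (Finset.mem_univ _))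
    have e2 : ∑ i, (x i ^ p) ^ j
        = ∑ v ∈ S, ((Finset.univ.filter (fun i => x i ^ p = v)).card : ℂ) * v ^ j := by
      rw [← Finset.sum_fiberwise_of_maps_to (s := Finset.univ) (t := S) (g := fun i => x i ^ p)]
      · refine Finset.sum_congr rfl fun v _ => ?_
        rw [Finset.sum_congr rfl (g := fun _ => v ^ j)]
        · simp
        · intro i hi
          rw [(Finset.mem_filter.1 hi).2]
      · intro i _
        exact Finset.mem_union_right _
          (Finset.mem_image_of_mem (fun i => x i ^ p) (Finset.mem_univ _))
    simp only [c, sub_mul, Finset.sum_sub_distrib]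
    rw [← e1, ← e2, h j hj, sub_self]
  let e := S.equivFin
  have hv := Matrix.eq_zero_of_forall_pow_sum_mul_pow_eq_zero
    (f := fun k => ((e.symm k : S) : ℂ)) (v := fun k => c (e.symm k))
    (Subtype.val_injective.comp e.symm.injective) (by
      intro j
      have := key j (lt_of_lt_of_le j.2 hS)
      rw [← Finset.sum_coe_sort] at this
      rw [← this]
      exact Fintype.sum_equiv e.symm _ _ (fun k => rfl))
  have hi : x i ∈ S :=
    Finset.mem_union_left _ (Finset.mem_image_of_mem _ (Finset.mem_univ _))
  have := congrFun hv (e ⟨x i, hi⟩)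
  simp only [Equiv.symm_apply_apply, Pi.zero_apply, c] at this
  have h0 : (Finset.univ.filter (fun k => x k ^ p = x i)) = ∅ := by
    ext k; simp [hcon k]
  rw [h0] at this
  simp only [Finset.card_empty, Nat.cast_zero, sub_zero, Nat.cast_eq_zero, Finset.card_eq_zero] at this
  have : i ∈ (∅ : Finset ι) := by rw [← this]; simp
  simp at this

/-- Power map permuting a finite set of nonzero values. -/
lemma torsion_of_image {ι : Type*} [Finite ι] (x : ι → ℂ) (p : ℕ) (hp : 1 < p)
    (h0 : ∀ i, x i ≠ 0) (h : ∀ i, ∃ k, x k ^ p = x i) (i : ι) : ∃ a, 0 < a ∧ x i ^ a = 1 := by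
  classical
  let B := Set.range x
  have hB : B.Finite := Set.finite_range x
  have hmap : ∀ z : B, z.1 ^ p ∈ B := by
    have hsub : B ⊆ (fun z => z ^ p) '' B := by
      rintro _ ⟨k, rfl⟩
      obtain ⟨l, hl⟩ := h k
      exact ⟨x l, ⟨l, rfl⟩, hl⟩
    have : (fun z : ℂ => z ^ p) '' B = B :=
      (Set.eq_of_subset_of_ncard_le hsub (Set.ncard_image_le hB) (hB.image _)).symm
    intro z
    exact this.subset ⟨z.1, z.2, rfl⟩
  have hit : ∀ k, x i ^ (p ^ k) ∈ B := by
    intro k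
    induction k with
    | zero => simpa using ⟨i, rfl⟩
    | succ k ih => rw [pow_succ, pow_mul]; exact hmap ⟨_, ih⟩
  have : Finite B := hB
  obtain ⟨a, b, hab, hE⟩ := Finite.exists_ne_map_eq_of_infinite (fun k => (⟨_, hit k⟩ : B))
  wlog hlt : a < b generalizing a b
  · exact this b a hab.symm hE.symm (by omega)
  have hE' : x i ^ (p ^ a) = x i ^ (p ^ b) := by simpa using hE
  have hlt' : p ^ a < p ^ b := Nat.pow_lt_pow_right hp hlt
  refine ⟨p ^ b - p ^ a, by omega, ?_⟩
  have h2 : x i ^ (p ^ a) * x i ^ (p ^ b - p ^ a) = x i ^ (p ^ a) * 1 := by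
    rw [← pow_add, mul_one, hE']; congr 1; omega
  exact mul_left_cancel₀ (pow_ne_zero _ (h0 i)) h2

/-- A weak form of Dobrowolski's bound on the house. -/
lemma dobrowolski {F : Type*} [Field F] [NumberField F] {n : ℕ} (hn : 1 ≤ n)
    (hd : Module.finrank ℚ F ≤ n) {x : F} (hx0 : x ≠ 0) (hx : IsIntegral ℤ x)
    (hb : ∀ φ : F →+* ℂ, ‖φ x‖ ^ (16 * n ^ 2) ≤ 2) : ∃ a, 0 < a ∧ x ^ a = 1 := by
  classical
  obtain ⟨p, hp, hp1, hp2⟩ := Nat.exists_prime_lt_and_le_two_mul (4 * n) (by omega)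
  let ι := F →ₐ[ℚ] ℂ
  have hcard : Fintype.card ι ≤ n := by
    rw [AlgHom.card]; exact hd
  have hnorm : ∀ (φ : ι) (k : ℕ), k ≤ 16 * n ^ 2 → ‖(φ x) ^ k‖ ≤ 2 := by
    intro φ k hk
    rw [norm_pow]
    rcases le_total ‖φ x‖ 1 with h1 | h1
    · exact (pow_le_one₀ (norm_nonneg _) h1).trans (by norm_num)
    · exact (pow_le_pow_right₀ h1 hk).trans (hb φ.toRingHom)
  have hIntg : ∀ j : ℕ, ∃ z : ℤ, ∑ φ : ι, (φ x) ^ j = z := by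
    intro j
    have h1 : IsIntegral ℤ (Algebra.trace ℚ F (x ^ j)) := Algebra.isIntegral_trace (hx.pow j)
    obtain ⟨z, hz⟩ := IsIntegrallyClosed.isIntegral_iff.1 h1
    refine ⟨z, ?_⟩
    have := trace_eq_sum_embeddings ℂ (K := ℚ) (L := F) (x := x ^ j)
    rw [← hz] at this
    simp only [map_pow] at this
    rw [← this]; simp
  have hpw : ∀ j < 2 * Fintype.card ι, ∑ φ : ι, (φ x) ^ j = ∑ φ : ι, ((φ x) ^ p) ^ j := by
    intro j hj
    obtain ⟨z, hz⟩ := hIntg j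
    obtain ⟨w, hw⟩ := hIntg (j * p)
    have hw' : ∑ φ : ι, ((φ x) ^ p) ^ j = w := by
      rw [← hw]; refine Finset.sum_congr rfl fun φ _ => ?_
      rw [← pow_mul, mul_comm]
    rw [hz, hw']
    have hcong : (p : ℤ) ∣ z ^ p - w := by
      let R := integralClosure ℤ ℂ
      let f : ι → R := fun φ => ⟨(φ x) ^ j, (hx.map (φ.restrictScalars ℤ)).pow j⟩
      obtain ⟨r, hr⟩ := sum_pow_prime_congr Finset.univ f hp
      have hr' := congrArg (fun t : R => (t : ℂ)) hr
      simp only [f, R] at hr'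
      push_cast at hr'
      simp only [← pow_mul] at hr'
      rw [hz, hw] at hr'
      have hrint : IsIntegral ℤ (r : ℂ) := r.2
      have hp0 : (p : ℂ) ≠ 0 := by exact_mod_cast hp.ne_zero
      have hrq : (r : ℂ) = algebraMap ℚ ℂ (((z ^ p - w : ℤ) : ℚ) / p) := by
        simp only [eq_ratCast]
        push_cast
        rw [eq_div_iff hp0, hr']; ring
      rw [hrq, isIntegral_algebraMap_iff (algebraMap ℚ ℂ).injective] at hrint
      obtain ⟨t, ht⟩ := IsIntegrallyClosed.isIntegral_iff.1 hrint
      refine ⟨t, ?_⟩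
      have hpq : (p : ℚ) ≠ 0 := by exact_mod_cast hp.ne_zero
      rw [eq_div_iff hpq] at ht
      have : ((z ^ p - w : ℤ) : ℚ) = ((p * t : ℤ) : ℚ) := by
        rw [← ht]; push_cast; simp [mul_comm]
      exact_mod_cast this
    have : Fact p.Prime := ⟨hp⟩
    have hfl : (p : ℤ) ∣ z ^ p - z := by
      rw [← ZMod.intCast_zmod_eq_zero_iff_dvd]
      push_cast
      rw [ZMod.pow_card, sub_self]
    have hdv : (p : ℤ) ∣ z - w := by
      have := dvd_sub hcong hfl
      simpa using this
    have hbz : ‖(z : ℂ)‖ ≤ 2 * n := by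
      rw [← hz]
      refine (norm_sum_le _ _).trans ?_
      refine (Finset.sum_le_sum (g := fun _ => (2 : ℝ)) fun φ _ => hnorm φ j ?_).trans ?_
      · nlinarith
      · simp only [Finset.sum_const, Finset.card_univ, nsmul_eq_mul]
        have : (Fintype.card ι : ℝ) ≤ n := by exact_mod_cast hcard
        linarith
    have hbw : ‖(w : ℂ)‖ ≤ 2 * n := by
      rw [← hw]
      refine (norm_sum_le _ _).trans ?_
      refine (Finset.sum_le_sum (g := fun _ => (2 : ℝ)) fun φ _ => hnorm φ (j * p) ?_).trans ?_
      · have : j ≤ 2 * n := by omega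
        calc j * p ≤ (2 * n) * (2 * (4 * n)) := Nat.mul_le_mul this hp2
          _ = 16 * n ^ 2 := by ring
      · simp only [Finset.sum_const, Finset.card_univ, nsmul_eq_mul]
        have : (Fintype.card ι : ℝ) ≤ n := by exact_mod_cast hcard
        linarith
    rw [Complex.norm_intCast] at hbz hbw
    have hbz' : |z| ≤ 2 * n := by exact_mod_cast hbz
    have hbw' : |w| ≤ 2 * n := by exact_mod_cast hbw
    have hzw : z - w = 0 := by
      apply Int.eq_zero_of_abs_lt_dvd hdv
      rw [abs_lt]
      rw [abs_le] at hbz' hbw'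
      constructor <;> omega
    have : z = w := by omega
    rw [this]
  have hne : Nonempty ι := ⟨IsAlgClosed.lift (R := ℚ) (S := F) (M := ℂ)⟩
  obtain ⟨φ⟩ := hne
  obtain ⟨a, ha, hE⟩ := torsion_of_image (fun φ : ι => φ x) p hp.one_lt
    (fun φ => by simpa using hx0) (powersum_image (fun φ : ι => φ x) p hpw) φ
  refine ⟨a, ha, φ.injective ?_⟩
  simpa using hE

open IsDedekindDomain NumberField in
/-- An element some power of which is almost integral, is integral. -/
lemma integral_of_pow {K : Type*} [Field K] [NumberField K] {D B k N b : ℕ}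
    (hD : Module.finrank ℚ K ≤ D) (hb0 : 0 < b) (hb : b ≤ 2 ^ B) (hN : k * (D * B) < N) {α : K}
    (h : IsIntegral ℤ ((b : K) ^ k * α ^ N)) : IsIntegral ℤ α := by
  suffices H : α ∈ (algebraMap (𝓞 K) K).range by
    obtain ⟨y, rfl⟩ := H
    exact y.2
  apply HeightOneSpectrum.mem_integers_of_valuation_le_one
  intro v
  by_contra hv
  push Not at hv
  have hα0 : v.valuation K α ≠ 0 := (lt_trans zero_lt_one hv).ne'
  have hα : WithZero.exp (1 : ℤ) ≤ v.valuation K α := by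
    rw [← WithZero.exp_log hα0] at hv ⊢
    rw [← WithZero.exp_zero, WithZero.exp_lt_exp] at hv
    rw [WithZero.exp_le_exp]; omega
  let bb : 𝓞 K := (b : 𝓞 K)
  have hbb0 : bb ≠ 0 := by simp only [bb]; exact_mod_cast hb0.ne'
  have hbb : v.valuation K (b : K) = v.intValuation bb := by
    have : (b : K) = algebraMap (𝓞 K) K bb := by simp [bb]
    rw [this, HeightOneSpectrum.valuation_of_algebraMap]
  have hvb0 : v.intValuation bb ≠ 0 := HeightOneSpectrum.intValuation_ne_zero _ _ hbb0
  obtain ⟨t, ht⟩ : ∃ t : ℕ, v.intValuation bb = WithZero.exp (-(t : ℤ)) := by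
    have h1 := v.intValuation_le_one bb
    rw [← WithZero.exp_log hvb0] at h1 ⊢
    rw [← WithZero.exp_zero, WithZero.exp_le_exp] at h1
    exact ⟨(-(WithZero.log (v.intValuation bb))).toNat, by congr 1; omega⟩
  have hIntg : v.valuation K ((b : K) ^ k * α ^ N) ≤ 1 := by
    have := v.valuation_le_one (K := K) (⟨_, h⟩ : 𝓞 K)
    exact this
  have hNt : N ≤ k * t := by
    rw [map_mul, map_pow, map_pow, hbb, ht] at hIntg
    have h2 : WithZero.exp (-(t : ℤ)) ^ k * WithZero.exp (1 : ℤ) ^ N ≤ 1 :=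
      le_trans (by gcongr) hIntg
    rw [← WithZero.exp_nsmul, ← WithZero.exp_nsmul, ← WithZero.exp_add, ← WithZero.exp_zero,
      WithZero.exp_le_exp] at h2
    simp only [smul_neg, nsmul_eq_mul, mul_one] at h2
    zify; linarith
  have htB : t ≤ D * B := by
    have hdvd := (v.intValuation_le_pow_iff_dvd bb t).1 ht.le
    have h3 := map_dvd Ideal.absNorm hdvd
    rw [map_pow, Ideal.absNorm_span_singleton] at h3
    have h4 : Algebra.norm ℤ bb = (b : ℤ) ^ Module.finrank ℤ (𝓞 K) := by
      have := Algebra.norm_algebraMap_of_basis (RingOfIntegers.basis K) (b : ℤ)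
      rw [Module.finrank_eq_card_basis (RingOfIntegers.basis K), ← this]
      simp [bb]
    rw [h4, RingOfIntegers.rank, Int.natAbs_pow, Int.natAbs_natCast] at h3
    have h5 : 2 ≤ Ideal.absNorm v.asIdeal := by
      have h6 : Ideal.absNorm v.asIdeal ≠ 0 := by
        rw [Ne, Ideal.absNorm_eq_zero_iff]; exact v.ne_bot
      have h7 : Ideal.absNorm v.asIdeal ≠ 1 := by
        rw [Ne, Ideal.absNorm_eq_one_iff]; exact v.isPrime.ne_top
      omega
    have h8 : 2 ^ t ≤ 2 ^ (D * B) := calc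
      2 ^ t ≤ Ideal.absNorm v.asIdeal ^ t := Nat.pow_le_pow_left h5 _
      _ ≤ b ^ Module.finrank ℚ K := Nat.le_of_dvd (by positivity) h3
      _ ≤ b ^ D := Nat.pow_le_pow_right hb0 hD
      _ ≤ (2 ^ B) ^ D := Nat.pow_le_pow_left hb _
      _ = 2 ^ (D * B) := by rw [← pow_mul, mul_comm]
    exact (Nat.pow_le_pow_iff_right (by norm_num)).1 h8
  have : k * t ≤ k * (D * B) := Nat.mul_le_mul_left _ htB
  omega

/-- If all relative norms of `α = ∏ λ_i ^ m_i` to the fields `ℚ(λ_i)` are torsion, then all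
archimedean absolute values of `α` are trivial. -/
lemma norm_eq_one_of_norms_torsion {K ι : Type*} [Field K] [NumberField K] [IsGalois ℚ K]
    [Fintype ι] (lam : ι → K) (hl0 : ∀ i, lam i ≠ 0) (m : ι → ℤ) (α : K)
    (hα : α = ∏ i, lam i ^ m i)
    (htor : ∀ i, ∃ a, 0 < a ∧ (Algebra.norm (IntermediateField.adjoin ℚ {lam i}) α) ^ a = 1)
    (ψ : K →+* ℂ) : ‖ψ α‖ = 1 := by
  classical
  have hα0 : α ≠ 0 := by
    rw [hα]; exact Finset.prod_ne_zero_iff.2 fun i _ => zpow_ne_zero _ (hl0 i)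
  let w : K → ℝ := fun x => Real.log ‖ψ x‖
  have wα : ∀ τ : K ≃ₐ[ℚ] K, w (τ α) = ∑ i, (m i : ℝ) * w (τ (lam i)) := by
    intro τ
    simp only [w, hα, map_prod, map_zpow₀, norm_prod, norm_zpow]
    rw [Real.log_prod]
    · simp [Real.log_zpow]
    · intro i _
      apply zpow_ne_zero
      simpa using hl0 i
  have horth : ∀ i, ∑ τ : K ≃ₐ[ℚ] K, w (τ α) * w (τ (lam i)) = 0 := by
    intro i
    let F := IntermediateField.adjoin ℚ {lam i}
    let γ : (K ≃ₐ[F] K) → (K ≃ₐ[ℚ] K) := fun σ => σ.restrictScalars ℚ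
    have hfix : ∀ σ : K ≃ₐ[F] K, σ (lam i) = lam i := by
      intro σ
      have := σ.commutes (IntermediateField.AdjoinSimple.gen ℚ (lam i))
      simpa using this
    have h1 : ∀ σ : K ≃ₐ[F] K, ∑ τ : K ≃ₐ[ℚ] K, w (τ α) * w (τ (lam i))
        = ∑ τ : K ≃ₐ[ℚ] K, w (τ (σ α)) * w (τ (lam i)) := by
      intro σ
      rw [← Equiv.sum_comp (Equiv.mulRight (γ σ))]
      refine Finset.sum_congr rfl fun τ _ => ?_
      simp only [Equiv.coe_mulRight, AlgEquiv.mul_apply, γ, AlgEquiv.restrictScalars_apply, hfix]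
    have h2 : ∀ τ : K ≃ₐ[ℚ] K, ∑ σ : K ≃ₐ[F] K, w (τ (σ α)) = 0 := by
      intro τ
      obtain ⟨a, ha, hE⟩ := htor i
      have h3 := Algebra.norm_eq_prod_automorphisms F α
      have h4 : w (τ (algebraMap F K (Algebra.norm F α))) = 0 := by
        have h5 : ‖ψ (τ (algebraMap F K (Algebra.norm F α)))‖ ^ a = 1 := by
          rw [← norm_pow, ← map_pow, ← map_pow, ← map_pow, hE]; simp
        have h6 := (pow_eq_one_iff_of_nonneg (norm_nonneg _) ha.ne').1 h5
        simp only [w, h6, Real.log_one]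
      rw [h3] at h4
      simp only [w, map_prod, norm_prod] at h4
      rw [Real.log_prod] at h4
      · exact h4
      · intro σ _
        simpa using hα0
    have h7 : (Fintype.card (K ≃ₐ[F] K) : ℝ) * ∑ τ : K ≃ₐ[ℚ] K, w (τ α) * w (τ (lam i)) = 0 := by
      calc _ = ∑ σ : K ≃ₐ[F] K, ∑ τ : K ≃ₐ[ℚ] K, w (τ α) * w (τ (lam i)) := by simp
        _ = ∑ σ : K ≃ₐ[F] K, ∑ τ : K ≃ₐ[ℚ] K, w (τ (σ α)) * w (τ (lam i)) :=
            Finset.sum_congr rfl fun σ _ => h1 σ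
        _ = ∑ τ : K ≃ₐ[ℚ] K, ∑ σ : K ≃ₐ[F] K, w (τ (σ α)) * w (τ (lam i)) := Finset.sum_comm
        _ = 0 := by
          refine Finset.sum_eq_zero fun τ _ => ?_
          rw [← Finset.sum_mul, h2, zero_mul]
    have h8 : (Fintype.card (K ≃ₐ[F] K) : ℝ) ≠ 0 := by
      exact_mod_cast Fintype.card_ne_zero
    exact (mul_eq_zero.1 h7).resolve_left h8
  have hsq : ∑ τ : K ≃ₐ[ℚ] K, w (τ α) * w (τ α) = 0 := by
    calc _ = ∑ τ : K ≃ₐ[ℚ] K, ∑ i, (m i : ℝ) * (w (τ α) * w (τ (lam i))) := by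
          refine Finset.sum_congr rfl fun τ _ => ?_
          nth_rewrite 2 [wα τ]
          rw [Finset.mul_sum]
          refine Finset.sum_congr rfl fun i _ => by ring
      _ = ∑ i, (m i : ℝ) * ∑ τ : K ≃ₐ[ℚ] K, w (τ α) * w (τ (lam i)) := by
          rw [Finset.sum_comm]
          refine Finset.sum_congr rfl fun i _ => by rw [Finset.mul_sum]
      _ = 0 := by simp [horth]
  rw [Finset.sum_eq_zero_iff_of_nonneg (fun τ _ => mul_self_nonneg _)] at hsq
  have h9 := hsq 1 (Finset.mem_univ _)
  simp only [AlgEquiv.one_apply, mul_self_eq_zero, w] at h9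
  have hpos : 0 < ‖ψ α‖ := by simpa using hα0
  exact Real.eq_one_of_pos_of_log_eq_zero hpos h9

/-- The key lemma: a monomial in the `λ_i` a power of which is a very short monomial, is torsion. -/
lemma torsion_of_short {K : Type*} [Field K] [NumberField K] [IsGalois ℚ K] {n : ℕ} (hn : 1 ≤ n)
    (lam : Fin n → K) (hl0 : ∀ i, lam i ≠ 0)
    (hdeg : ∀ i, Module.finrank ℚ (IntermediateField.adjoin ℚ {lam i}) ≤ n)
    {D B b a : ℕ} (hD : Module.finrank ℚ K ≤ D) (hb0 : 0 < b) (hb : b ≤ 2 ^ B)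
    (hi1 : ∀ i, IsIntegral ℤ ((b : K) * lam i)) (hi2 : ∀ i, IsIntegral ℤ ((b : K) * (lam i)⁻¹))
    (ha1 : ∀ (ψ : K →+* ℂ) (i), ‖ψ (lam i)‖ ≤ 2 ^ a)
    (ha2 : ∀ (ψ : K →+* ℂ) (i), ‖ψ ((lam i)⁻¹)‖ ≤ 2 ^ a)
    {N Kb : ℕ} (hN : 0 < N) (hK1 : n * (D * B) < Kb) (hK2 : n * (a * D * (16 * n ^ 2)) ≤ Kb)
    (m E : Fin n → ℤ) (hE : ∀ i, (E i).natAbs * Kb ≤ N)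
    (hpow : (∏ i, lam i ^ m i) ^ N = ∏ i, lam i ^ E i) :
    ∃ t, 0 < t ∧ (∏ i, lam i ^ m i) ^ t = 1 := by
  classical
  set α := ∏ i, lam i ^ m i with hα
  have hα0 : α ≠ 0 := Finset.prod_ne_zero_iff.2 fun i _ => zpow_ne_zero _ (hl0 i)
  clear_value α
  set k := ∑ i, (E i).natAbs with hk
  have hkK : k * Kb ≤ n * N := by
    rw [hk, Finset.sum_mul]
    refine (Finset.sum_le_sum fun i _ => hE i).trans ?_
    simp
  have hKpos : 0 < Kb := by omega
  -- integrality
  have hIntg : IsIntegral ℤ α := by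
    apply integral_of_pow (k := k) (N := N) hD hb0 hb
    · refine lt_of_mul_lt_mul_right (a := Kb) ?_ (Nat.zero_le _)
      calc k * (D * B) * Kb = (k * Kb) * (D * B) := by ring
        _ ≤ (n * N) * (D * B) := Nat.mul_le_mul_right _ hkK
        _ = N * (n * (D * B)) := by ring
        _ < N * Kb := Nat.mul_lt_mul_of_pos_left hK1 hN
    · rw [hpow, hk, ← Finset.prod_pow_eq_pow_sum, ← Finset.prod_mul_distrib]
      refine IsIntegral.prod _ fun i _ => ?_
      rcases Int.natAbs_eq (E i) with h | h
      · have : (b : K) ^ (E i).natAbs * lam i ^ E i = ((b : K) * lam i) ^ (E i).natAbs := by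
          rw [mul_pow]; congr 1; nth_rewrite 1 [h]; rw [zpow_natCast]
        rw [this]; exact (hi1 i).pow _
      · have : (b : K) ^ (E i).natAbs * lam i ^ E i = ((b : K) * (lam i)⁻¹) ^ (E i).natAbs := by
          rw [mul_pow]; congr 1; nth_rewrite 1 [h]; rw [zpow_neg, zpow_natCast, inv_pow]
        rw [this]; exact (hi2 i).pow _
  have hsmall : ∀ ψ : K →+* ℂ, ‖ψ α‖ ^ N ≤ 2 ^ (a * k) := by
    intro ψ
    rw [← norm_pow, ← map_pow, hpow, map_prod, norm_prod, hk, Finset.mul_sum,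
      ← Finset.prod_pow_eq_pow_sum]
    refine Finset.prod_le_prod (fun i _ => norm_nonneg _) fun i _ => ?_
    rw [pow_mul]
    rcases Int.natAbs_eq (E i) with h | h
    · nth_rewrite 1 [h]
      rw [zpow_natCast, map_pow, norm_pow]
      exact pow_le_pow_left₀ (norm_nonneg _) (ha1 ψ i) _
    · nth_rewrite 1 [h]
      rw [zpow_neg, zpow_natCast, ← inv_pow, map_pow, norm_pow]
      exact pow_le_pow_left₀ (norm_nonneg _) (ha2 ψ i) _
  have htor : ∀ i, ∃ t, 0 < t ∧
      (Algebra.norm (IntermediateField.adjoin ℚ {lam i}) α) ^ t = 1 := by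
    intro i
    let F := IntermediateField.adjoin ℚ {lam i}
    have hβ0 : Algebra.norm F α ≠ 0 := Algebra.norm_ne_zero_iff.2 hα0
    apply dobrowolski hn (hdeg i) hβ0 (Algebra.isIntegral_norm F hIntg)
    intro φ
    let _ : Algebra F ℂ := φ.toAlgebra
    let ψ : K →ₐ[F] ℂ := IsAlgClosed.lift
    have h1 : φ (Algebra.norm F α) = ∏ σ : K ≃ₐ[F] K, ψ (σ α) := by
      have := congrArg ψ (Algebra.norm_eq_prod_automorphisms F α)
      rw [ψ.commutes, map_prod] at this
      exact this
    have hcard : Fintype.card (K ≃ₐ[F] K) ≤ D := by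
      rw [← Nat.card_eq_fintype_card, IsGalois.card_aut_eq_finrank]
      refine le_trans ?_ hD
      rw [← Module.finrank_mul_finrank ℚ F K]
      exact Nat.le_mul_of_pos_left _ Module.finrank_pos
    have h2 : ‖φ (Algebra.norm F α)‖ ^ N ≤ 2 ^ (a * k * D) := by
      rw [h1, norm_prod, ← Finset.prod_pow]
      calc ∏ σ : K ≃ₐ[F] K, ‖ψ (σ α)‖ ^ N ≤ ∏ σ : K ≃ₐ[F] K, (2 : ℝ) ^ (a * k) :=
            Finset.prod_le_prod (fun σ _ => by positivity)
              (fun σ _ => hsmall (ψ.toRingHom.comp (σ : K →+* K)))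
        _ = 2 ^ (a * k * Fintype.card (K ≃ₐ[F] K)) := by
            rw [Finset.prod_const, Finset.card_univ, ← pow_mul]
        _ ≤ _ := pow_le_pow_right₀ (by norm_num) (Nat.mul_le_mul_left _ hcard)
    rw [← pow_le_pow_iff_left₀ (by positivity) (by norm_num) hN.ne', ← pow_mul, mul_comm, pow_mul]
    calc _ ≤ ((2 : ℝ) ^ (a * k * D)) ^ (16 * n ^ 2) := pow_le_pow_left₀ (by positivity) h2 _
      _ = 2 ^ (a * k * D * (16 * n ^ 2)) := by rw [← pow_mul]
      _ ≤ 2 ^ N := by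
        apply pow_le_pow_right₀ (by norm_num)
        refine le_of_mul_le_mul_right (a := Kb) ?_ hKpos
        calc a * k * D * (16 * n ^ 2) * Kb = (k * Kb) * (a * D * (16 * n ^ 2)) := by ring
          _ ≤ (n * N) * (a * D * (16 * n ^ 2)) := Nat.mul_le_mul_right _ hkK
          _ = N * (n * (a * D * (16 * n ^ 2))) := by ring
          _ ≤ N * Kb := Nat.mul_le_mul_left _ hK2
  obtain ⟨t, ht, h⟩ := NumberField.Embeddings.pow_eq_one_of_norm_eq_one K ℂ hIntg
    (norm_eq_one_of_norms_torsion lam hl0 m α hα htor)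
  exact ⟨t, ht, h⟩

lemma sq_totient_odd (w : ℕ) (hw : Odd w) : w ≤ w.totient ^ 2 := by
  induction w using Nat.recOnPosPrimePosCoprime with
  | zero => simp
  | one => simp
  | prime_pow p k hp hk =>
    have hp2 : p ≠ 2 := by
      rintro rfl
      rw [Nat.odd_pow_iff hk.ne'] at hw
      exact absurd hw (by decide)
    have hp3 : 3 ≤ p := by have := hp.two_le; omega
    rw [Nat.totient_prime_pow hp hk]
    obtain ⟨q, rfl⟩ : ∃ q, p = q + 3 := ⟨p - 3, by omega⟩
    obtain ⟨j, rfl⟩ : ∃ j, k = j + 1 := ⟨k - 1, by omega⟩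
    simp only [Nat.add_sub_cancel]
    have h1 : 1 ≤ (q + 3) ^ j := Nat.one_le_pow _ _ (by omega)
    have h2 : q + 3 - 1 = q + 2 := by omega
    rw [h2, pow_succ, mul_pow]
    calc (q + 3) ^ j * (q + 3) ≤ (q + 3) ^ j * (q + 2) ^ 2 := Nat.mul_le_mul_left _ (by nlinarith)
      _ ≤ ((q + 3) ^ j) ^ 2 * (q + 2) ^ 2 := Nat.mul_le_mul_right _ (by nlinarith)
  | coprime a b ha hb hab iha ihb =>
    rw [Nat.odd_mul] at hw
    rw [Nat.totient_mul hab, mul_pow]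
    exact Nat.mul_le_mul (iha hw.1) (ihb hw.2)

lemma sq_totient (w : ℕ) (hw : w ≠ 0) : w ≤ 2 * w.totient ^ 2 := by
  obtain ⟨k, m, hm, rfl⟩ := Nat.exists_eq_two_pow_mul_odd hw
  have h1 := sq_totient_odd m hm
  rw [Nat.totient_mul (Nat.Coprime.pow_left _ (Nat.coprime_two_left.2 hm)), mul_pow]
  rcases Nat.eq_zero_or_pos k with rfl | hk
  · simp; omega
  · rw [Nat.totient_prime_pow Nat.prime_two hk]
    obtain ⟨j, rfl⟩ : ∃ j, k = j + 1 := ⟨k - 1, by omega⟩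
    simp only [Nat.add_sub_cancel]
    have h2 : 1 ≤ 2 ^ j := Nat.one_le_two_pow
    calc 2 ^ (j + 1) * m = 2 * (2 ^ j * m) := by ring
      _ ≤ 2 * (((2 ^ j) ^ 2) * m.totient ^ 2) := by
        refine Nat.mul_le_mul_left _ (Nat.mul_le_mul (by nlinarith) h1)
      _ = _ := by ring

open NumberField NumberField.Units in
/-- The number of roots of unity in a number field of degree at most `D`. -/
lemma card_torsion_le {K : Type*} [Field K] [NumberField K] {D : ℕ}
    (hD : Module.finrank ℚ K ≤ D) (S : Finset Kˣ) (hS : ∀ x ∈ S, ∃ t, 0 < t ∧ x ^ t = 1) :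
    S.card ≤ 2 * D ^ 2 := by
  classical
  have hw0 : torsionOrder K ≠ 0 := torsionOrder_ne_zero K
  have : NeZero (torsionOrder K) := ⟨hw0⟩
  obtain ⟨μ, hμ⟩ : ∃ μ : torsion K, orderOf μ = torsionOrder K := by
    exact IsCyclic.exists_ofOrder_eq_natCard
  have hprim : IsPrimitiveRoot ((μ : (𝓞 K)ˣ) : K) (torsionOrder K) := by
    rw [← IsPrimitiveRoot.iff_orderOf, ← IsPrimitiveRoot.coe_submonoidClass_iff,
      ← IsPrimitiveRoot.coe_units_iff] at hμ
    exact hμ.map_of_injective (FaithfulSMul.algebraMap_injective (𝓞 K) K)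
  have htot : (torsionOrder K).totient ≤ D := by
    refine le_trans hprim.totient_le_degree_minpoly (le_trans ?_ hD)
    have hi : IsIntegral ℤ ((μ : (𝓞 K)ˣ) : K) := hprim.isIntegral (Nat.pos_of_ne_zero hw0)
    have := minpoly.isIntegrallyClosed_eq_field_fractions' ℚ hi
    have h2 : (minpoly ℚ ((μ : (𝓞 K)ˣ) : K)).natDegree = (minpoly ℤ ((μ : (𝓞 K)ˣ) : K)).natDegree := by
      rw [this, (minpoly.monic hi).natDegree_map]
    rw [← h2]
    exact minpoly.natDegree_le _
  have hsub : S.card ≤ torsionOrder K := by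
    have h1 : S.image (fun u : Kˣ => (u : K)) ⊆ Polynomial.nthRootsFinset (torsionOrder K) (1 : K) := by
      intro x hx
      obtain ⟨u, hu, rfl⟩ := Finset.mem_image.1 hx
      rw [Polynomial.mem_nthRootsFinset (Nat.pos_of_ne_zero hw0)]
      obtain ⟨t, ht, he⟩ := hS u hu
      have hfo : 0 < orderOf u := orderOf_pos_iff.2 (isOfFinOrder_iff_pow_eq_one.2 ⟨t, ht, he⟩)
      have : NeZero (orderOf u) := ⟨hfo.ne'⟩
      have hdv := dvd_torsionOrder_of_isPrimitiveRoot
        ((IsPrimitiveRoot.coe_units_iff (ζ := u)).2 (IsPrimitiveRoot.orderOf u))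
      have := orderOf_dvd_iff_pow_eq_one.1 hdv
      rw [← Units.val_pow_eq_pow_val, this, Units.val_one]
    have h2 := Finset.card_le_card h1
    rw [Finset.card_image_of_injective _ Units.val_injective, hprim.card_nthRootsFinset] at h2
    exact h2
  calc S.card ≤ torsionOrder K := hsub
    _ ≤ 2 * (torsionOrder K).totient ^ 2 := sq_totient _ hw0
    _ ≤ 2 * D ^ 2 := Nat.mul_le_mul_left _ (Nat.pow_le_pow_left htot 2)

lemma abs_lt_of_scaled {N T l x d e : ℤ} (hN : 0 < N) (hT : N < T) (hl : |l| ≤ T) (hd0 : 0 ≤ d)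
    (hd : d ≤ N - 1) (he : |e| < N) (h : N * x = d * l + e) : |x| < T := by
  have h1 : N * |x| ≤ d * |l| + |e| := by
    have : N * |x| = |N * x| := by rw [abs_mul, abs_of_pos hN]
    rw [this, h]
    refine (abs_add_le _ _).trans ?_
    rw [abs_mul, abs_of_nonneg hd0]
  have h2 : d * |l| ≤ (N - 1) * T := mul_le_mul hd hl (abs_nonneg _) (by omega)
  have h3 : N * |x| < N * T := by linarith
  exact lt_of_mul_lt_mul_left h3 hN.le

/-- Generation of the relation lattice by short vectors, from a pigeonhole argument. -/
lemma lattice_generated {G : Type*} [CommGroup G] {n : ℕ} (lam : Fin n → G) {Kb ω N : ℕ}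
    (hKb : 0 < Kb) (hN : N = Kb ^ n * ω + 1)
    (hcount : ∀ S : Finset G, (∀ x ∈ S, ∃ t, 0 < t ∧ x ^ t = 1) → S.card ≤ ω)
    (htor : ∀ m E : Fin n → ℤ, (∀ i, (E i).natAbs * Kb ≤ N) →
      (∏ i, lam i ^ m i) ^ N = ∏ i, lam i ^ E i → ∃ t, 0 < t ∧ (∏ i, lam i ^ m i) ^ t = 1)
    (l : Fin n → ℤ) (hl : ∏ i, lam i ^ l i = 1) :
    l ∈ AddSubgroup.closure
      {r : Fin n → ℤ | ∏ i, lam i ^ r i = 1 ∧ ∀ i, (r i).natAbs ≤ N} := by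
  classical
  have hNpos : 0 < N := by omega
  suffices H : ∀ T : ℕ, ∀ l : Fin n → ℤ, ∏ i, lam i ^ l i = 1 → (∀ i, (l i).natAbs ≤ T) →
      l ∈ AddSubgroup.closure
        {r : Fin n → ℤ | ∏ i, lam i ^ r i = 1 ∧ ∀ i, (r i).natAbs ≤ N} by
    exact H (∑ i, (l i).natAbs) l hl fun i =>
      Finset.single_le_sum (f := fun i => (l i).natAbs) (fun _ _ => Nat.zero_le _) (Finset.mem_univ i)
  intro T
  induction T using Nat.strong_induction_on with
  | _ T ih =>
  intro l hl hlT
  by_cases hTN : T ≤ N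
  · exact AddSubgroup.subset_closure ⟨hl, fun i => (hlT i).trans hTN⟩
  push Not at hTN
  have hNz : (0 : ℤ) < N := by exact_mod_cast hNpos
  -- integer parts and remainders
  let q : ℕ → Fin n → ℤ := fun t i => (t * l i) / N
  let r : ℕ → Fin n → ℤ := fun t i => (t * l i) % N
  have hqr : ∀ t i, (N : ℤ) * q t i + r t i = t * l i := fun t i => Int.mul_ediv_add_emod _ _
  have hr0 : ∀ t i, 0 ≤ r t i := fun t i => Int.emod_nonneg _ hNz.ne'
  have hrN : ∀ t i, r t i < N := fun t i => Int.emod_lt_of_pos _ hNz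
  have hbox : ∀ t i, ((r t i * Kb) / N).toNat < Kb := by
    intro t i
    have h1 : (r t i * Kb) / N < Kb := by
      apply Int.ediv_lt_of_lt_mul hNz
      have := hrN t i
      have hK : (0 : ℤ) < Kb := by exact_mod_cast hKb
      nlinarith
    have h2 : 0 ≤ (r t i * Kb) / N := Int.ediv_nonneg (mul_nonneg (hr0 t i) (by positivity)) hNz.le
    omega
  let box : ℕ → (Fin n → Fin Kb) := fun t i => ⟨_, hbox t i⟩
  obtain ⟨y, -, hy⟩ := Finset.exists_lt_card_fiber_of_mul_lt_card_of_maps_to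
    (s := Finset.range N) (t := (Finset.univ : Finset (Fin n → Fin Kb))) (f := box) (n := ω)
    (fun _ _ => Finset.mem_univ _) (by simp [hN])
  set Fb := (Finset.range N).filter (fun t => box t = y) with hFb
  obtain ⟨t0, ht0⟩ : Fb.Nonempty := Finset.card_pos.1 (by omega)
  let f : ℕ → G := fun t => ∏ i, lam i ^ (q t i - q t0 i)
  have hf : ∀ t ∈ Fb, ∃ a, 0 < a ∧ f t ^ a = 1 := by
    intro t ht
    apply htor (fun i => q t i - q t0 i) (fun i => r t0 i - r t i)
    · intro i
      have hb : box t = box t0 := by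
        rw [(Finset.mem_filter.1 ht).2, (Finset.mem_filter.1 ht0).2]
      have hb2 : ((r t i * Kb) / N).toNat = ((r t0 i * Kb) / N).toNat :=
        congrArg Fin.val (congrFun hb i)
      have h1 : 0 ≤ (r t i * Kb) / N := Int.ediv_nonneg (mul_nonneg (hr0 t i) (by positivity)) hNz.le
      have h2 : 0 ≤ (r t0 i * Kb) / N := Int.ediv_nonneg (mul_nonneg (hr0 t0 i) (by positivity)) hNz.le
      have h3 : (r t i * Kb) / N = (r t0 i * Kb) / N := by omega
      have e1 := Int.mul_ediv_add_emod (r t i * Kb) N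
      have e2 := Int.mul_ediv_add_emod (r t0 i * Kb) N
      have b1 := Int.emod_nonneg (r t i * Kb) hNz.ne'
      have b2 := Int.emod_nonneg (r t0 i * Kb) hNz.ne'
      have b3 := Int.emod_lt_of_pos (r t i * Kb) hNz
      have b4 := Int.emod_lt_of_pos (r t0 i * Kb) hNz
      rw [h3] at e1
      zify
      have : |r t0 i - r t i| * (Kb : ℤ) = |(r t0 i - r t i) * Kb| := by
        rw [abs_mul, Nat.abs_cast]
      rw [this, abs_le]
      constructor <;> linarith [sub_mul (r t0 i) (r t i) (Kb : ℤ)]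
    · rw [← Finset.prod_pow]
      have h4 : ∀ i, (lam i ^ (q t i - q t0 i)) ^ N
          = lam i ^ (r t0 i - r t i) * (lam i ^ l i) ^ ((t : ℤ) - t0) := by
        intro i
        rw [← zpow_natCast, ← zpow_mul, ← zpow_mul, ← zpow_add]
        congr 1
        have := hqr t i
        have := hqr t0 i
        linarith
      simp only [h4, Finset.prod_mul_distrib, Finset.prod_zpow, hl, one_zpow, mul_one]
  have hlt : (Fb.image f).card < Fb.card := by
    refine lt_of_le_of_lt (hcount _ ?_) hy
    intro x hx
    obtain ⟨t, ht, rfl⟩ := Finset.mem_image.1 hx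
    exact hf t ht
  obtain ⟨t1, h1, t2, h2, hne, heq⟩ := Finset.exists_ne_map_eq_of_card_lt_of_maps_to hlt
    (fun t ht => Finset.mem_image_of_mem f ht)
  wlog hlt12 : t1 < t2 generalizing t1 t2
  · exact this t2 h2 t1 h1 hne.symm heq.symm (by omega)
  have ht2N : t2 < N := Finset.mem_range.1 (Finset.mem_filter.1 h2).1
  let m : Fin n → ℤ := fun i => q t2 i - q t1 i
  have hm : ∏ i, lam i ^ m i = 1 := by
    have : ∀ i, lam i ^ m i = lam i ^ (q t2 i - q t0 i) * (lam i ^ (q t1 i - q t0 i))⁻¹ := by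
      intro i
      rw [← zpow_neg, ← zpow_add]; congr 1; simp only [m]; ring
    simp only [this, Finset.prod_mul_distrib, Finset.prod_inv_distrib]
    change f t2 * (f t1)⁻¹ = 1
    rw [heq, mul_inv_cancel]
  have hlm : ∏ i, lam i ^ (l - m) i = 1 := by
    simp only [Pi.sub_apply, zpow_sub, Finset.prod_mul_distrib, Finset.prod_inv_distrib, hl, hm]
    simp
  have key : ∀ i, (N : ℤ) * m i = ((t2 : ℤ) - t1) * l i - (r t2 i - r t1 i) := by
    intro i
    have := hqr t2 i
    have := hqr t1 i
    simp only [m]; linarith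
  have hd1 : (1 : ℤ) ≤ (t2 : ℤ) - t1 := by omega
  have hd2 : (t2 : ℤ) - t1 ≤ N - 1 := by omega
  have hbm : ∀ i, (m i).natAbs ≤ T - 1 := by
    intro i
    have := abs_lt_of_scaled (N := N) (T := T) (l := l i) (x := m i) (d := (t2 : ℤ) - t1)
      (e := -(r t2 i - r t1 i)) hNz (by exact_mod_cast hTN)
      (by rw [Int.abs_eq_natAbs]; exact_mod_cast hlT i) (by omega) hd2
      (by rw [abs_neg, abs_lt]; constructor <;> linarith [hr0 t1 i, hr0 t2 i, hrN t1 i, hrN t2 i])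
      (by rw [key i]; ring)
    rw [Int.abs_eq_natAbs] at this
    omega
  have hblm : ∀ i, ((l - m) i).natAbs ≤ T - 1 := by
    intro i
    have := abs_lt_of_scaled (N := N) (T := T) (l := l i) (x := (l - m) i)
      (d := N - ((t2 : ℤ) - t1))
      (e := (r t2 i - r t1 i)) hNz (by exact_mod_cast hTN)
      (by rw [Int.abs_eq_natAbs]; exact_mod_cast hlT i) (by omega) (by omega)
      (by rw [abs_lt]; constructor <;> linarith [hr0 t1 i, hr0 t2 i, hrN t1 i, hrN t2 i])
      (by rw [Pi.sub_apply, mul_sub, key i]; ring)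
    rw [Int.abs_eq_natAbs] at this
    omega
  have hsum : l = m + (l - m) := by simp
  rw [hsum]
  exact add_mem (ih (T - 1) (by omega) m hm hbm) (ih (T - 1) (by omega) (l - m) hlm hblm)

theorem aeval_charpoly_iff {L : Type*} [Field L] [Algebra ℚ L] {n : ℕ}
    (M : Matrix (Fin n) (Fin n) ℚ) (μ : L) :
    Polynomial.aeval μ M.charpoly = 0 ↔
      ∃ v : Fin n → L, v ≠ 0 ∧ (M.map (algebraMap ℚ L)).mulVec v = μ • v := by
  have h1 : Polynomial.aeval μ M.charpoly
      = (Matrix.scalar (Fin n) μ - M.map (algebraMap ℚ L)).det := by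
    rw [← Matrix.eval_charpoly, Matrix.charpoly_map, Polynomial.eval_map, Polynomial.aeval_def]
  rw [h1, ← Matrix.exists_mulVec_eq_zero_iff]
  refine exists_congr fun v => and_congr_right fun _ => ?_
  rw [Matrix.sub_mulVec, sub_eq_zero, eq_comm, Matrix.scalar_apply, ← Matrix.smul_one_eq_diagonal,
    Matrix.smul_mulVec, Matrix.one_mulVec]

theorem integral_of_intMatrix {L : Type*} [Field L] [Algebra ℚ L] {n : ℕ}
    (M : Matrix (Fin n) (Fin n) ℚ) (μ : L) (hμ : Polynomial.aeval μ M.charpoly = 0)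
    (b : ℕ) (Z : Matrix (Fin n) (Fin n) ℤ) (hZ : ∀ i j, (Z i j : ℚ) = (b : ℚ) * M i j) :
    IsIntegral ℤ ((b : L) * μ) := by
  obtain ⟨v, hv0, hv⟩ := (aeval_charpoly_iff M μ).1 hμ
  refine ⟨Z.charpoly, Matrix.charpoly_monic Z, ?_⟩
  rw [← Polynomial.eval_map, ← Matrix.charpoly_map, Matrix.eval_charpoly,
    ← Matrix.exists_mulVec_eq_zero_iff]
  refine ⟨v, hv0, ?_⟩
  rw [Matrix.sub_mulVec, sub_eq_zero, eq_comm, Matrix.scalar_apply, ← Matrix.smul_one_eq_diagonal,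
    Matrix.smul_mulVec, Matrix.one_mulVec]
  have : Z.map (algebraMap ℤ L) = (b : L) • M.map (algebraMap ℚ L) := by
    ext i j
    have : CharZero L := algebraRat.charZero L
    have := congrArg (algebraMap ℚ L) (hZ i j)
    simpa using this
  rw [this, Matrix.smul_mulVec, hv, smul_smul]

theorem norm_root_le {L : Type*} [Field L] [Algebra ℚ L] {n : ℕ}
    (M : Matrix (Fin n) (Fin n) ℚ) (μ : L) (hμ : Polynomial.aeval μ M.charpoly = 0)
    (A : ℝ) (hA : ∀ i j, |((M i j : ℚ) : ℝ)| ≤ A) (ψ : L →+* ℂ) :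
    ‖ψ μ‖ ≤ n * A := by
  have hμ' : Polynomial.aeval (ψ μ) M.charpoly = 0 := by
    have : Polynomial.aeval (ψ.toRatAlgHom μ) M.charpoly = 0 := by
      rw [Polynomial.aeval_algHom_apply, hμ, map_zero]
    exact this
  obtain ⟨v, hv0, hv⟩ := (aeval_charpoly_iff M (ψ μ)).1 hμ'
  have hne : Nonempty (Fin n) := by
    by_contra hh
    rw [not_nonempty_iff] at hh
    exact hv0 (Subsingleton.elim _ _)
  obtain ⟨i, -, hi⟩ := Finset.exists_max_image Finset.univ (fun i => ‖v i‖) Finset.univ_nonempty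
  have hvi : 0 < ‖v i‖ := by
    rcases (norm_nonneg (v i)).lt_or_eq with h | h
    · exact h
    · exfalso
      apply hv0
      funext j
      have := hi j (Finset.mem_univ j)
      rw [← h] at this
      simpa using this
  have h1 := congrFun hv i
  have h2 : ‖ψ μ‖ * ‖v i‖ ≤ (n * A) * ‖v i‖ := by
    rw [← norm_mul]
    have : ψ μ * v i = ∑ j, ((M i j : ℚ) : ℂ) * v j := by
      simpa [Matrix.mulVec, dotProduct] using h1.symm
    rw [this]
    refine (norm_sum_le _ _).trans ?_
    have : ∀ j ∈ Finset.univ, ‖((M i j : ℚ) : ℂ) * v j‖ ≤ A * ‖v i‖ := by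
      intro j hj
      rw [norm_mul]
      have e : ‖((M i j : ℚ) : ℂ)‖ = |((M i j : ℚ) : ℝ)| := by
        rw [← Complex.ofReal_ratCast, Complex.norm_real, Real.norm_eq_abs]
      rw [e]
      exact mul_le_mul (hA i j) (hi j hj) (norm_nonneg _) ((abs_nonneg _).trans (hA i j))
    refine (Finset.sum_le_sum this).trans ?_
    simp [mul_assoc]
  exact le_of_mul_le_mul_right h2 hvi

theorem root_inv {L : Type*} [Field L] [Algebra ℚ L] {n : ℕ}
    (g : GL (Fin n) ℚ) (μ : L) (h0 : μ ≠ 0)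
    (hμ : Polynomial.aeval μ (g : Matrix (Fin n) (Fin n) ℚ).charpoly = 0) :
    Polynomial.aeval μ⁻¹ ((g⁻¹ : GL (Fin n) ℚ) : Matrix (Fin n) (Fin n) ℚ).charpoly = 0 := by
  obtain ⟨v, hv0, hv⟩ := (aeval_charpoly_iff _ μ).1 hμ
  refine (aeval_charpoly_iff _ _).2 ⟨v, hv0, ?_⟩
  have h1 : (((g⁻¹ : GL (Fin n) ℚ) : Matrix (Fin n) (Fin n) ℚ).map (algebraMap ℚ L)).mulVec
      (((g : Matrix (Fin n) (Fin n) ℚ).map (algebraMap ℚ L)).mulVec v) = v := by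
    rw [Matrix.mulVec_mulVec, ← Matrix.map_mul, ← Units.val_mul]
    simp
  rw [hv, Matrix.mulVec_smul] at h1
  conv_rhs => rw [← h1]
  rw [smul_smul, inv_mul_cancel₀ h0, one_smul]

theorem exists_eigvec {L : Type*} [Field L] {n : ℕ} (S U : Matrix (Fin n) (Fin n) L)
    (hc : Commute S U) (hU : (U - 1) ^ n = 0) (v : Fin n → L) (hv : v ≠ 0) (μ : L)
    (hS : S.mulVec v = μ • v) : ∃ w : Fin n → L, w ≠ 0 ∧ (S * U).mulVec w = μ • w := by
  classical
  have hex : ∃ k, ((U - 1) ^ k).mulVec v = 0 := ⟨n, by rw [hU, Matrix.zero_mulVec]⟩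
  have hk := Nat.find_spec hex
  obtain ⟨k, hkk⟩ : ∃ k, Nat.find hex = k + 1 := by
    apply Nat.exists_eq_succ_of_ne_zero
    intro h
    rw [h, pow_zero, Matrix.one_mulVec] at hk
    exact hv hk
  have hlt : ¬ ((U - 1) ^ k).mulVec v = 0 := Nat.find_min hex (by omega)
  rw [hkk] at hk
  refine ⟨_, hlt, ?_⟩
  have hc' : Commute S ((U - 1) ^ k) :=
    (hc.sub_right (Commute.one_right S)).pow_right k
  have hUw : U.mulVec (((U - 1) ^ k).mulVec v) = ((U - 1) ^ k).mulVec v := by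
    have : (U - 1).mulVec (((U - 1) ^ k).mulVec v) = 0 := by
      rw [Matrix.mulVec_mulVec, ← pow_succ', hk]
    rw [Matrix.sub_mulVec, Matrix.one_mulVec, sub_eq_zero] at this
    exact this
  rw [← Matrix.mulVec_mulVec, hUw, Matrix.mulVec_mulVec, hc'.eq, ← Matrix.mulVec_mulVec, hS,
    Matrix.mulVec_smul]

theorem eig_root {n : ℕ} (g : GL (Fin n) ℚ) (s u P : GL (Fin n) Qbar) (dv : Fin n → Qbar)
    (hg : ∀ i j, ((s * u : GL (Fin n) Qbar) : Matrix (Fin n) (Fin n) Qbar) i j =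
        algebraMap ℚ Qbar ((g : Matrix (Fin n) (Fin n) ℚ) i j))
    (hc : s * u = u * s) (hs : (s : Matrix (Fin n) (Fin n) Qbar) =
      (P : Matrix (Fin n) (Fin n) Qbar) * Matrix.diagonal dv *
      ((P⁻¹ : GL (Fin n) Qbar) : Matrix (Fin n) (Fin n) Qbar))
    (hu : IsUnipotent u) (j : Fin n) :
    Polynomial.aeval (dv j) (g : Matrix (Fin n) (Fin n) ℚ).charpoly = 0 := by
  have hgm : (g : Matrix (Fin n) (Fin n) ℚ).map (algebraMap ℚ Qbar)
      = (s : Matrix (Fin n) (Fin n) Qbar) * (u : Matrix (Fin n) (Fin n) Qbar) := by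
    ext a b
    rw [Matrix.map_apply, ← hg, Units.val_mul]
  have hPP : ((P⁻¹ : GL (Fin n) Qbar) : Matrix (Fin n) (Fin n) Qbar) *
      (P : Matrix (Fin n) (Fin n) Qbar) = 1 := by
    rw [← Units.val_mul]; simp
  rw [aeval_charpoly_iff, hgm]
  apply exists_eigvec (s : Matrix (Fin n) (Fin n) Qbar) u ?_ hu
    ((P : Matrix (Fin n) (Fin n) Qbar).mulVec (Pi.single j 1))
  · intro h
    have h2 := congrArg (fun v => ((P⁻¹ : GL (Fin n) Qbar) : Matrix (Fin n) (Fin n) Qbar).mulVec v) h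
    simp only [Matrix.mulVec_mulVec, hPP, Matrix.one_mulVec, Matrix.mulVec_zero] at h2
    have := congrFun h2 j
    simp at this
  · rw [hs, ← Matrix.mulVec_mulVec, Matrix.mulVec_mulVec _ _ (P : Matrix (Fin n) (Fin n) Qbar), hPP,
      Matrix.one_mulVec, ← Matrix.mulVec_mulVec, ← Matrix.mulVec_smul]
    congr 1
    ext i
    rw [Matrix.mulVec_diagonal]
    by_cases hij : i = j
    · subst hij; simp
    · simp [hij]
  · have := congrArg (fun x : GL (Fin n) Qbar => (x : Matrix (Fin n) (Fin n) Qbar)) hc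
    simpa [Commute, SemiconjBy, Units.val_mul] using this

theorem dv_ne_zero {n : ℕ} (s P : GL (Fin n) Qbar) (dv : Fin n → Qbar)
    (hs : (s : Matrix (Fin n) (Fin n) Qbar) =
      (P : Matrix (Fin n) (Fin n) Qbar) * Matrix.diagonal dv *
      ((P⁻¹ : GL (Fin n) Qbar) : Matrix (Fin n) (Fin n) Qbar)) (j : Fin n) : dv j ≠ 0 := by
  intro h
  have h1 : (s : Matrix (Fin n) (Fin n) Qbar).det ≠ 0 :=
    ((Matrix.isUnit_iff_isUnit_det _).1 s.isUnit).ne_zero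
  apply h1
  rw [hs, Matrix.det_mul, Matrix.det_mul, Matrix.det_diagonal,
    Finset.prod_eq_zero (Finset.mem_univ j) h]
  simp

theorem abs_le_of_ratHeight {q : ℚ} {h : ℕ} (hq : ratHeight q ≤ h) : |q| ≤ h := by
  have h1 : q.num.natAbs ≤ h := (le_max_left _ _).trans hq
  have h2 : |q| * q.den = q.num.natAbs := by
    have h3 : |q * q.den| = |(q.num : ℚ)| := by rw [Rat.mul_den_eq_num]
    rw [abs_mul, Nat.abs_cast] at h3
    rw [h3, Nat.cast_natAbs, Int.cast_abs]
  have h3 : (1 : ℚ) ≤ q.den := by exact_mod_cast q.pos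
  have h4 : ((q.num.natAbs : ℕ) : ℚ) ≤ h := by exact_mod_cast h1
  nlinarith [abs_nonneg q]

theorem mat_bounds {n l : ℕ} (hn : 1 ≤ n) (hl : 1 ≤ l) (g : GL (Fin n) ℚ)
    (hg : ∀ i j, ratHeight ((g : Matrix (Fin n) (Fin n) ℚ) i j) ≤ 2 ^ l) :
    ∃ b : ℕ, 0 < b ∧ b ≤ 2 ^ (4 * n ^ 2 * l) ∧
      (∃ Z : Matrix (Fin n) (Fin n) ℤ, ∀ i j,
        (Z i j : ℚ) = (b : ℚ) * (g : Matrix (Fin n) (Fin n) ℚ) i j) ∧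
      (∃ Z : Matrix (Fin n) (Fin n) ℤ, ∀ i j,
        (Z i j : ℚ) = (b : ℚ) * ((g⁻¹ : GL (Fin n) ℚ) : Matrix (Fin n) (Fin n) ℚ) i j) ∧
      (∀ i j, (n : ℚ) * |(g : Matrix (Fin n) (Fin n) ℚ) i j| ≤ 2 ^ (4 * n ^ 2 * l)) ∧
      (∀ i j, (n : ℚ) * |((g⁻¹ : GL (Fin n) ℚ) : Matrix (Fin n) (Fin n) ℚ) i j|
        ≤ 2 ^ (4 * n ^ 2 * l)) := by
  set A : Matrix (Fin n) (Fin n) ℚ := (g : Matrix (Fin n) (Fin n) ℚ) with hA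
  set A' : Matrix (Fin n) (Fin n) ℚ := ((g⁻¹ : GL (Fin n) ℚ) : Matrix (Fin n) (Fin n) ℚ) with hA'
  have hAA : A * A' = 1 := by rw [hA, hA', ← Units.val_mul]; simp
  have hdet : A.det ≠ 0 := ((Matrix.isUnit_iff_isUnit_det _).1 g.isUnit).ne_zero
  have habs : ∀ i j, |A i j| ≤ 2 ^ l := fun i j => by
    have := abs_le_of_ratHeight (hg i j)
    exact_mod_cast this
  have hden : ∀ i j, (A i j).den ≤ 2 ^ l := fun i j => (le_max_right _ _).trans (hg i j)
  set qi : Fin n → ℕ := fun i => ∏ j, (A i j).den with hqi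
  have hqi0 : ∀ i, 0 < qi i := fun i => Finset.prod_pos fun j _ => (A i j).pos
  have hqile : ∀ i, qi i ≤ 2 ^ (l * n) := fun i => by
    have := Finset.prod_le_pow_card Finset.univ (fun j => (A i j).den) (2 ^ l)
      (fun j _ => hden i j)
    simpa [pow_mul] using this
  set q : ℕ := ∏ i, qi i with hq
  have hq0 : 0 < q := Finset.prod_pos fun i _ => hqi0 i
  have hqle : q ≤ 2 ^ (n ^ 2 * l) := by
    have := Finset.prod_le_pow_card Finset.univ qi (2 ^ (l * n)) (fun i _ => hqile i)
    refine this.trans (le_of_eq ?_)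
    rw [← pow_mul, Finset.card_univ, Fintype.card_fin]
    congr 1; ring
  -- the integer matrix with scaled rows
  have hRex : ∀ i j, ∃ z : ℤ, (z : ℚ) = (qi i : ℚ) * A i j := by
    intro i j
    obtain ⟨t, ht⟩ : (A i j).den ∣ qi i := Finset.dvd_prod_of_mem _ (Finset.mem_univ j)
    refine ⟨t * (A i j).num, ?_⟩
    rw [ht]
    push_cast
    conv_rhs => rw [mul_comm ((A i j).den : ℚ), mul_assoc, mul_comm ((A i j).den : ℚ),
      Rat.mul_den_eq_num]
  choose R hR using hRex
  set Rm : Matrix (Fin n) (Fin n) ℤ := Matrix.of R with hRm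
  have hRmap : Rm.map (Int.castRingHom ℚ) = Matrix.diagonal (fun i => (qi i : ℚ)) * A := by
    ext i j
    rw [Matrix.diagonal_mul]
    exact hR i j
  have hRdet : (Rm.det : ℚ) = q * A.det := by
    have h1 := (Int.castRingHom ℚ).map_det Rm
    rw [RingHom.mapMatrix_apply, hRmap, Matrix.det_mul, Matrix.det_diagonal] at h1
    rw [hq, Nat.cast_prod]
    exact h1
  have hRdet0 : Rm.det ≠ 0 := by
    intro h
    rw [h] at hRdet
    have : (q : ℚ) * A.det ≠ 0 := mul_ne_zero (by exact_mod_cast hq0.ne') hdet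
    exact this (by rw [← hRdet]; simp)
  have hfac : (n.factorial : ℚ) ≤ 2 ^ (n ^ 2) := by
    have h1 : n.factorial ≤ n ^ n := Nat.factorial_le_pow n
    have h2 : n ^ n ≤ (2 ^ n) ^ n := Nat.pow_le_pow_left Nat.lt_two_pow_self.le _
    have h3 : n.factorial ≤ 2 ^ (n ^ 2) := by
      rw [pow_two n, pow_mul]; exact h1.trans h2
    exact_mod_cast h3
  have hdl : ∀ C : Matrix (Fin n) (Fin n) ℚ, (∀ i j, |C i j| ≤ 2 ^ l) →
      |C.det| ≤ 2 ^ (n ^ 2 + l * n) := by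
    intro C hC
    have := Matrix.det_le (A := C) (abv := AbsoluteValue.abs) (x := 2 ^ l) hC
    rw [Fintype.card_fin, nsmul_eq_mul] at this
    refine le_trans this ?_
    rw [pow_add, pow_mul]
    exact mul_le_mul_of_nonneg_right hfac (by positivity)
  have hq' : (q : ℚ) ≤ 2 ^ (n ^ 2 * l) := by exact_mod_cast hqle
  have hnn : n ≤ n ^ 2 := Nat.le_self_pow two_ne_zero n
  have e1 : n ^ 2 ≤ n ^ 2 * l := Nat.le_mul_of_pos_right _ hl
  have e2 : l * n ≤ n ^ 2 * l := by rw [mul_comm]; exact Nat.mul_le_mul_right _ hnn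
  have hn2 : (n : ℚ) ≤ 2 ^ n := by exact_mod_cast (Nat.lt_two_pow_self (n := n)).le
  have hdetR : ((Rm.det.natAbs : ℕ) : ℚ) = |(Rm.det : ℚ)| := by
    rw [Nat.cast_natAbs, Int.cast_abs]
  -- adjugate relation
  have hadj : (Rm.adjugate.map (Int.castRingHom ℚ)) * Matrix.diagonal (fun i => (qi i : ℚ))
      = (Rm.det : ℚ) • A' := by
    have h1 : Rm.adjugate.map (Int.castRingHom ℚ) * (Matrix.diagonal (fun i => (qi i : ℚ)) * A)
        = (Rm.det : ℚ) • (1 : Matrix (Fin n) (Fin n) ℚ) := by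
      rw [← hRmap, ← Matrix.map_mul, Matrix.adjugate_mul]
      ext i j
      rw [Matrix.map_apply, Matrix.smul_apply, Matrix.smul_apply, smul_eq_mul, smul_eq_mul,
        Matrix.one_apply, Matrix.one_apply]
      split_ifs <;> simp [-Int.cast_det]
    calc _ = Rm.adjugate.map (Int.castRingHom ℚ) *
          (Matrix.diagonal (fun i => (qi i : ℚ)) * A) * A' := by
            rw [Matrix.mul_assoc, Matrix.mul_assoc, hAA, Matrix.mul_one]
      _ = _ := by rw [h1, Matrix.smul_mul, Matrix.one_mul]
  refine ⟨q * Rm.det.natAbs, Nat.mul_pos hq0 (Int.natAbs_pos.2 hRdet0), ?_, ?_, ?_, ?_, ?_⟩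
  · have : ((q * Rm.det.natAbs : ℕ) : ℚ) ≤ 2 ^ (4 * n ^ 2 * l) := by
      push_cast
      rw [hdetR, hRdet, abs_mul, Nat.abs_cast]
      calc (q : ℚ) * (q * |A.det|) ≤ 2 ^ (n ^ 2 * l) * (2 ^ (n ^ 2 * l) * 2 ^ (n ^ 2 + l * n)) := by
            gcongr
            exact hdl A habs
        _ ≤ 2 ^ (4 * n ^ 2 * l) := by
            rw [← pow_add, ← pow_add]
            apply pow_le_pow_right₀ (by norm_num)
            nlinarith
    exact_mod_cast this
  · refine ⟨Matrix.of fun i j => (Rm.det.natAbs : ℤ) * (∏ k ∈ Finset.univ.erase i, (qi k : ℤ)) * R i j, ?_⟩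
    intro i j
    have hqq : (q : ℚ) = (∏ k ∈ Finset.univ.erase i, (qi k : ℚ)) * qi i := by
      rw [hq, Finset.prod_erase_mul _ _ (Finset.mem_univ i)]; push_cast; rfl
    simp only [Matrix.of_apply]
    push_cast [-Int.natCast_natAbs]
    rw [hR, hqq]
    ring
  · refine ⟨(q * Rm.det.sign : ℤ) • (Rm.adjugate * Matrix.diagonal (fun i => (qi i : ℤ))), ?_⟩
    intro i j
    have h1 := congrFun (congrFun hadj i) j
    rw [Matrix.mul_diagonal] at h1
    simp only [Matrix.map_apply, Matrix.smul_apply, smul_eq_mul, eq_intCast] at h1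
    have h2 : ((Rm.det.natAbs : ℕ) : ℚ) = (Rm.det.sign : ℚ) * Rm.det := by
      have := Int.sign_mul_self_eq_natAbs Rm.det
      rw [← Int.cast_mul, this]; rfl
    rw [Matrix.smul_apply, Matrix.mul_diagonal, Nat.cast_mul, h2]
    rw [smul_eq_mul]
    simp only [Int.cast_mul, Int.cast_natCast]
    rw [mul_assoc, h1]
    ring
  · intro i j
    calc (n : ℚ) * |A i j| ≤ 2 ^ n * 2 ^ l := by
          gcongr
          exact habs i j
      _ ≤ _ := by
          rw [← pow_add]
          apply pow_le_pow_right₀ (by norm_num)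
          nlinarith [Nat.mul_le_mul hn hl, Nat.mul_le_mul_right l hn]
  · intro i j
    have h1 : A' i j * A.det = A.adjugate i j := by
      have : A.adjugate = A.det • A' := by
        calc A.adjugate = A.adjugate * A * A' := by
              rw [Matrix.mul_assoc, hAA, Matrix.mul_one]
          _ = _ := by rw [Matrix.adjugate_mul, Matrix.smul_mul, Matrix.one_mul]
      rw [this, Matrix.smul_apply, smul_eq_mul, mul_comm]
    have h2 : |A.adjugate i j| ≤ 2 ^ (n ^ 2 + l * n) := by
      rw [Matrix.adjugate_apply]
      apply hdl
      intro a c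
      by_cases haj : a = j
      · subst haj
        rw [Matrix.updateRow_self]
        by_cases hc : c = i
        · subst hc; simp [one_le_pow₀]
        · simp [hc]
      · rw [Matrix.updateRow_ne haj]; exact habs a c
    have h3 : 1 ≤ q * |A.det| := by
      have : (1 : ℚ) ≤ |(Rm.det : ℚ)| := by
        exact_mod_cast Int.one_le_abs hRdet0
      rwa [hRdet, abs_mul, Nat.abs_cast] at this
    have h4 : |A' i j| ≤ q * |A.adjugate i j| := by
      rw [← h1, abs_mul]
      nlinarith [abs_nonneg (A' i j)]
    calc (n : ℚ) * |A' i j| ≤ 2 ^ n * (2 ^ (n ^ 2 * l) * 2 ^ (n ^ 2 + l * n)) := by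
          gcongr
          exact h4.trans (by gcongr)
      _ ≤ _ := by
          rw [← pow_add, ← pow_add]
          apply pow_le_pow_right₀ (by norm_num)
          nlinarith

theorem isSplitting_rat (p : Polynomial ℚ) : Polynomial.IsSplittingField ℚ p.SplittingField p := by
  convert Polynomial.IsSplittingField.splittingField p
  exact Subsingleton.elim _ _

theorem normal_rat (p : Polynomial ℚ) : Normal ℚ p.SplittingField :=
  have := isSplitting_rat p
  Normal.of_isSplittingField p

theorem finrank_splitting_le (p : Polynomial ℚ) (n : ℕ) (hp : p.natDegree ≤ n) :
    Module.finrank ℚ p.SplittingField ≤ n.factorial := by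
  classical
  have : Fact ((p.map (algebraMap ℚ Qbar)).Splits) := ⟨IsAlgClosed.splits _⟩
  have hnor : Normal ℚ p.SplittingField := normal_rat p
  have hgal : IsGalois ℚ p.SplittingField := ⟨⟩
  have h1 : Nat.card p.Gal = Module.finrank ℚ p.SplittingField :=
    by
      have e : (DivisionRing.toRatAlgebra : Algebra ℚ p.SplittingField)
        = Polynomial.SplittingField.instAlgebra_1 p := Subsingleton.elim _ _
      rw [← IsGalois.card_aut_eq_finrank ℚ p.SplittingField, e]
      rfl
  rw [← h1]
  have h2 := Nat.card_le_card_of_injective _ (Polynomial.Gal.galActionHom_injective p Qbar)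
  refine h2.trans ?_
  rw [Nat.card_perm]
  apply Nat.factorial_le
  have := Polynomial.ncard_rootSet_le p Qbar
  exact this.trans hp

theorem relations_generated {n l : ℕ} (hn : 1 ≤ n) (hl : 1 ≤ l) (g : GL (Fin n) ℚ)
    (hg : ∀ i j, ratHeight ((g : Matrix (Fin n) (Fin n) ℚ) i j) ≤ 2 ^ l)
    (dv : Fin n → Qbar) (h0 : ∀ j, dv j ≠ 0)
    (hroot : ∀ j, Polynomial.aeval (dv j) (g : Matrix (Fin n) (Fin n) ℚ).charpoly = 0)
    {N : ℕ} (hN : N = (64 * n ^ 5 * n.factorial * l) ^ n * (2 * n.factorial ^ 2) + 1)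
    (r : Fin n → ℤ) (hr : ∏ i, dv i ^ r i = 1) :
    r ∈ AddSubgroup.closure {r : Fin n → ℤ | ∏ i, dv i ^ r i = 1 ∧ ∀ i, (r i).natAbs ≤ N} := by
  set p := (g : Matrix (Fin n) (Fin n) ℚ).charpoly with hp
  have hpm : p.Monic := Matrix.charpoly_monic _
  have hdegp : p.natDegree = n := by rw [hp, Matrix.charpoly_natDegree_eq_dim, Fintype.card_fin]
  let K := p.SplittingField
  have : NumberField K := { to_charZero := algebraRat.charZero K, to_finiteDimensional := inferInstance }
  have hnor : Normal ℚ K := normal_rat p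
  have : IsGalois ℚ K := ⟨⟩
  have hD : Module.finrank ℚ K ≤ n.factorial := finrank_splitting_le p n hdegp.le
  let ι : K →ₐ[ℚ] Qbar := IsAlgClosed.lift
  have hlex : ∀ j, ∃ x : K, ι x = dv j := by
    intro j
    have h1 := (Polynomial.SplittingField.splits p).image_rootSet ι
    have h2 : dv j ∈ p.rootSet Qbar := by
      rw [Polynomial.mem_rootSet]
      exact ⟨hpm.ne_zero, hroot j⟩
    rw [← h1] at h2
    obtain ⟨x, -, hx⟩ := h2
    exact ⟨x, hx⟩
  choose lam hlam using hlex
  have hinj : Function.Injective ι := (ι : K →+* Qbar).injective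
  have hl0 : ∀ j, lam j ≠ 0 := fun j h => h0 j (by rw [← hlam, h, map_zero])
  have hroot' : ∀ j, Polynomial.aeval (lam j) p = 0 := by
    intro j
    apply hinj
    rw [map_zero, ← Polynomial.aeval_algHom_apply, hlam, hroot]
  have hprod : ∀ m : Fin n → ℤ, ∏ i, dv i ^ m i = 1 ↔ ∏ i, lam i ^ m i = 1 := by
    intro m
    rw [← hinj.eq_iff, map_one, map_prod]
    simp only [map_zpow₀, hlam]
  obtain ⟨b, hb0, hb, ⟨Z1, hZ1⟩, ⟨Z2, hZ2⟩, hA1, hA2⟩ := mat_bounds hn hl g hg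
  have hn0 : (0 : ℝ) < n := by exact_mod_cast hn
  have hconv : ∀ x : ℚ, (n : ℚ) * |x| ≤ 2 ^ (4 * n ^ 2 * l) →
      |(x : ℝ)| ≤ 2 ^ (4 * n ^ 2 * l) / n := by
    intro x hx
    rw [le_div_iff₀ hn0, mul_comm]
    exact_mod_cast hx
  have ha1 : ∀ (ψ : K →+* ℂ) i, ‖ψ (lam i)‖ ≤ 2 ^ (4 * n ^ 2 * l) := by
    intro ψ i
    have := norm_root_le _ (lam i) (hroot' i) _ (fun a c => hconv _ (hA1 a c)) ψ
    rwa [mul_div_cancel₀ _ hn0.ne'] at this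
  have ha2 : ∀ (ψ : K →+* ℂ) i, ‖ψ ((lam i)⁻¹)‖ ≤ 2 ^ (4 * n ^ 2 * l) := by
    intro ψ i
    have := norm_root_le _ ((lam i)⁻¹) (root_inv g _ (hl0 i) (hroot' i)) _
      (fun a c => hconv _ (hA2 a c)) ψ
    rwa [mul_div_cancel₀ _ hn0.ne'] at this
  have hi1 : ∀ i, IsIntegral ℤ ((b : K) * lam i) := fun i =>
    integral_of_intMatrix _ _ (hroot' i) b Z1 hZ1
  have hi2 : ∀ i, IsIntegral ℤ ((b : K) * (lam i)⁻¹) := fun i =>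
    integral_of_intMatrix _ _ (root_inv g _ (hl0 i) (hroot' i)) b Z2 hZ2
  have hdeg : ∀ i, Module.finrank ℚ (IntermediateField.adjoin ℚ {lam i}) ≤ n := by
    intro i
    rw [IntermediateField.adjoin.finrank (Algebra.IsIntegral.isIntegral (lam i))]
    have := Polynomial.natDegree_le_of_dvd (minpoly.dvd ℚ (lam i) (hroot' i)) hpm.ne_zero
    rwa [hdegp] at this
  have hKpos : 0 < 64 * n ^ 5 * n.factorial * l := by
    have := n.factorial_pos
    positivity
  have hf := n.factorial_pos
  have key := lattice_generated (G := Kˣ) (fun i => Units.mk0 (lam i) (hl0 i)) hKpos hN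
    (card_torsion_le hD) (by
      intro m E hE hpow
      have hpow' := congrArg (fun x : Kˣ => (x : K)) hpow
      simp only [Units.val_pow_eq_pow_val, Units.coe_prod, Units.val_zpow_eq_zpow_val,
        Units.val_mk0] at hpow'
      obtain ⟨t, ht, h⟩ := torsion_of_short hn lam hl0 hdeg hD hb0 hb hi1 hi2 ha1 ha2
        (N := N) (Kb := 64 * n ^ 5 * n.factorial * l) (by omega)
        (by
          have h1 : n ^ 3 ≤ n ^ 5 := Nat.pow_le_pow_right hn (by norm_num)
          have h2 : n * (n.factorial * (4 * n ^ 2 * l)) = n ^ 3 * (4 * n.factorial * l) := by ring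
          have h3 : 64 * n ^ 5 * n.factorial * l = n ^ 5 * (64 * n.factorial * l) := by ring
          rw [h2, h3]
          have h4 : 0 < n.factorial * l := by positivity
          have h5 : 0 < n ^ 5 := by positivity
          calc n ^ 3 * (4 * n.factorial * l) ≤ n ^ 5 * (4 * n.factorial * l) :=
                Nat.mul_le_mul_right _ h1
            _ < n ^ 5 * (64 * n.factorial * l) :=
                Nat.mul_lt_mul_of_pos_left (by nlinarith) h5)
        (le_of_eq (by ring)) m E hE hpow'
      refine ⟨t, ht, ?_⟩
      apply Units.ext
      simpa only [Units.val_pow_eq_pow_val, Units.coe_prod, Units.val_zpow_eq_zpow_val,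
        Units.val_mk0, Units.val_one] using h) r
  have hu : ∀ m : Fin n → ℤ, (∏ i, (Units.mk0 (lam i) (hl0 i)) ^ m i = 1) ↔
      ∏ i, dv i ^ m i = 1 := by
    intro m
    rw [hprod, Units.ext_iff]
    simp only [Units.coe_prod, Units.val_zpow_eq_zpow_val, Units.val_mk0, Units.val_one]
  simp only [hu] at key
  exact key hr

theorem numerics {n h l N : ℕ} (hn : 1 ≤ n) (hh : 2 ≤ h) (hl : l = Nat.log 2 h + 1)
    (hN : N = (64 * n ^ 5 * n.factorial * l) ^ n * (2 * n.factorial ^ 2) + 1) :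
    N ≤ ⌈(((384 : ℕ) : ℝ) * n ^ 7 * n.factorial * Real.logb 2 h) ^ n⌉₊ := by
  have hlog1 : (1 : ℝ) ≤ Real.logb 2 h := by
    rw [Real.le_logb_iff_rpow_le (by norm_num) (by positivity)]
    rw [Real.rpow_one]; exact_mod_cast hh
  have hlog2 : (Nat.log 2 h : ℝ) ≤ Real.logb 2 h := by
    rw [Real.le_logb_iff_rpow_le (by norm_num) (by positivity), Real.rpow_natCast]
    exact_mod_cast Nat.pow_log_le_self 2 (by omega)
  have hl2 : (l : ℝ) ≤ 2 * Real.logb 2 h := by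
    rw [hl]; push_cast; linarith
  have hf := n.factorial_pos
  have hff : n.factorial ^ 2 ≤ (n ^ 2) ^ n := by
    rw [← pow_mul, mul_comm, pow_mul]
    exact Nat.pow_le_pow_left (Nat.factorial_le_pow n) 2
  have hKpos : 0 < 64 * n ^ 5 * n.factorial * l := by
    have : 0 < l := by omega
    positivity
  have h1 : N ≤ (192 * n ^ 7 * n.factorial * l) ^ n := by
    have e : (192 * n ^ 7 * n.factorial * l) ^ n
        = 3 ^ n * ((64 * n ^ 5 * n.factorial * l) ^ n * (n ^ 2) ^ n) := by
      rw [← mul_pow, ← mul_pow]; congr 1; ring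
    have h3 : 3 ≤ 3 ^ n := Nat.le_self_pow (by omega) 3
    have hp : 0 < (64 * n ^ 5 * n.factorial * l) ^ n := pow_pos hKpos n
    rw [e, hN]
    have h4 : (64 * n ^ 5 * n.factorial * l) ^ n * n.factorial ^ 2 ≤
      (64 * n ^ 5 * n.factorial * l) ^ n * (n ^ 2) ^ n := Nat.mul_le_mul_left _ hff
    have h5 : 0 < (64 * n ^ 5 * n.factorial * l) ^ n * n.factorial ^ 2 := by positivity
    calc _ ≤ 3 * ((64 * n ^ 5 * n.factorial * l) ^ n * n.factorial ^ 2) := by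
          generalize (64 * n ^ 5 * n.factorial * l) ^ n = A at *
          nlinarith
      _ ≤ _ := Nat.mul_le_mul h3 h4
  have h2 : (N : ℝ) ≤ (((384 : ℕ) : ℝ) * n ^ 7 * n.factorial * Real.logb 2 h) ^ n := by
    calc (N : ℝ) ≤ (192 * n ^ 7 * n.factorial * l : ℝ) ^ n := by exact_mod_cast h1
      _ ≤ _ := by
        apply pow_le_pow_left₀ (by positivity)
        have h6 : (0 : ℝ) ≤ 192 * n ^ 7 * n.factorial := by positivity
        have := mul_le_mul_of_nonneg_left hl2 h6
        push_cast
        linarith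
  have := h2.trans (Nat.le_ceil _)
  exact_mod_cast this

theorem semisimple_of_diag {n : ℕ} (s P : GL (Fin n) Qbar) (dv : Fin n → Qbar)
    (hs : (s : Matrix (Fin n) (Fin n) Qbar) =
      (P : Matrix (Fin n) (Fin n) Qbar) * Matrix.diagonal dv *
      ((P⁻¹ : GL (Fin n) Qbar) : Matrix (Fin n) (Fin n) Qbar)) :
    Module.End.IsSemisimple (Matrix.toLin' (s : Matrix (Fin n) (Fin n) Qbar)) := by
  classical
  set q : Polynomial Qbar := ∏ μ ∈ Finset.univ.image dv, (Polynomial.X - Polynomial.C μ) with hq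
  have hsq : Squarefree q := by
    apply Polynomial.Separable.squarefree
    exact Polynomial.separable_prod' (fun x _ y _ hxy =>
      (Polynomial.pairwise_coprime_X_sub_C Function.injective_id hxy))
      (fun x _ => Polynomial.separable_X_sub_C)
  apply Module.End.isSemisimple_of_squarefree_aeval_eq_zero hsq
  have hPP : ((P⁻¹ : GL (Fin n) Qbar) : Matrix (Fin n) (Fin n) Qbar) *
      (P : Matrix (Fin n) (Fin n) Qbar) = 1 := by
    rw [← Units.val_mul]; simp
  have hPP' : (P : Matrix (Fin n) (Fin n) Qbar) *
      ((P⁻¹ : GL (Fin n) Qbar) : Matrix (Fin n) (Fin n) Qbar) = 1 := by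
    rw [← Units.val_mul]; simp
  have hev : ∀ j, Matrix.toLin' (s : Matrix (Fin n) (Fin n) Qbar)
      ((P : Matrix (Fin n) (Fin n) Qbar).mulVec (Pi.single j 1)) =
      dv j • ((P : Matrix (Fin n) (Fin n) Qbar).mulVec (Pi.single j 1)) := by
    intro j
    rw [Matrix.toLin'_apply, hs, ← Matrix.mulVec_mulVec,
      Matrix.mulVec_mulVec _ _ (P : Matrix (Fin n) (Fin n) Qbar), hPP,
      Matrix.one_mulVec, ← Matrix.mulVec_mulVec, ← Matrix.mulVec_smul]
    congr 1
    ext i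
    rw [Matrix.mulVec_diagonal]
    by_cases hij : i = j
    · subst hij; simp
    · simp [hij]
  have hev0 : ∀ j, ((P : Matrix (Fin n) (Fin n) Qbar).mulVec (Pi.single j 1)) ≠ 0 := by
    intro j h
    have h2 := congrArg (fun v => ((P⁻¹ : GL (Fin n) Qbar) : Matrix (Fin n) (Fin n) Qbar).mulVec v) h
    simp only [Matrix.mulVec_mulVec, hPP, Matrix.one_mulVec, Matrix.mulVec_zero] at h2
    have := congrFun h2 j
    simp at this
  have hz : (Polynomial.aeval (Matrix.toLin' (s : Matrix (Fin n) (Fin n) Qbar)) q) ∘ₗ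
      Matrix.toLin' (P : Matrix (Fin n) (Fin n) Qbar) = 0 := by
    apply LinearMap.pi_ext'
    intro j
    ext1
    simp only [LinearMap.comp_apply, LinearMap.coe_single, Matrix.toLin'_apply]
    have h3 : Module.End.HasEigenvector (Matrix.toLin' (s : Matrix (Fin n) (Fin n) Qbar)) (dv j)
        ((P : Matrix (Fin n) (Fin n) Qbar).mulVec (Pi.single j 1)) :=
      ⟨Module.End.mem_eigenspace_iff.2 (hev j), hev0 j⟩
    rw [Module.End.aeval_apply_of_hasEigenvector h3, hq, Polynomial.eval_prod,
      Finset.prod_eq_zero (Finset.mem_image_of_mem dv (Finset.mem_univ j)) (by simp)]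
    simp
  calc _ = ((Polynomial.aeval (Matrix.toLin' (s : Matrix (Fin n) (Fin n) Qbar)) q) ∘ₗ
      Matrix.toLin' (P : Matrix (Fin n) (Fin n) Qbar)) ∘ₗ
      Matrix.toLin' ((P⁻¹ : GL (Fin n) Qbar) : Matrix (Fin n) (Fin n) Qbar) := by
        rw [LinearMap.comp_assoc, ← Matrix.toLin'_mul, hPP', Matrix.toLin'_one, LinearMap.comp_id]
    _ = 0 := by rw [hz, LinearMap.zero_comp]

theorem s_rational {n : ℕ} (g : GL (Fin n) ℚ) (s u P : GL (Fin n) Qbar) (dv : Fin n → Qbar)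
    (hg : ∀ i j, ((s * u : GL (Fin n) Qbar) : Matrix (Fin n) (Fin n) Qbar) i j =
        algebraMap ℚ Qbar ((g : Matrix (Fin n) (Fin n) ℚ) i j))
    (hc : s * u = u * s) (hs : (s : Matrix (Fin n) (Fin n) Qbar) =
      (P : Matrix (Fin n) (Fin n) Qbar) * Matrix.diagonal dv *
      ((P⁻¹ : GL (Fin n) Qbar) : Matrix (Fin n) (Fin n) Qbar))
    (hu : IsUnipotent u) :
    ∃ r : GL (Fin n) ℚ, Matrix.GeneralLinearGroup.map (algebraMap ℚ Qbar) r = s := by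
  obtain ⟨n0, hn0, s0, hs0, hnil, hss, hf⟩ := Module.End.exists_isNilpotent_isSemisimple
    (f := Matrix.toLinAlgEquiv' (R := ℚ) (g : Matrix (Fin n) (Fin n) ℚ))
  have hcomm0 : Commute n0 s0 := by
    have h1 : Commute s0 (Matrix.toLinAlgEquiv' (R := ℚ) (g : Matrix (Fin n) (Fin n) ℚ)) :=
      (Algebra.commute_of_mem_adjoin_self hs0).symm
    have h2 := Algebra.commute_of_mem_adjoin_singleton_of_commute hn0 h1
    exact h2.symm
  let φ : Module.End ℚ (Fin n → ℚ) →+* Module.End Qbar (Fin n → Qbar) :=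
    ((Matrix.toLinAlgEquiv' (R := Qbar) (n := Fin n)).toRingEquiv : Matrix (Fin n) (Fin n) Qbar →+* _).comp
      (((algebraMap ℚ Qbar).mapMatrix).comp
        ((Matrix.toLinAlgEquiv' (R := ℚ) (n := Fin n)).symm.toRingEquiv :
          Module.End ℚ (Fin n → ℚ) →+* Matrix (Fin n) (Fin n) ℚ))
  have hφ : ∀ M : Matrix (Fin n) (Fin n) ℚ, φ (Matrix.toLinAlgEquiv' M)
      = Matrix.toLin' (M.map (algebraMap ℚ Qbar)) := by
    intro M
    simp [φ]
    rfl
  have hss' : (φ s0).IsSemisimple := by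
    have h1 := hss.minpoly_squarefree
    rw [← PerfectField.separable_iff_squarefree] at h1
    have h2 : Squarefree ((minpoly ℚ s0).map (algebraMap ℚ Qbar)) := h1.map.squarefree
    apply Module.End.isSemisimple_of_squarefree_aeval_eq_zero h2
    have h3 := congrArg φ (minpoly.aeval ℚ s0)
    rw [map_zero, Polynomial.aeval_def, Polynomial.hom_eval₂] at h3
    rw [Polynomial.aeval_def, Polynomial.eval₂_map, ← h3]
    congr 1
    exact RingHom.ext_rat _ _
  set S := (s : Matrix (Fin n) (Fin n) Qbar) with hS
  set U := (u : Matrix (Fin n) (Fin n) Qbar) with hU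
  have hSU : Commute S U := by
    have := congrArg (fun x : GL (Fin n) Qbar => (x : Matrix (Fin n) (Fin n) Qbar)) hc
    simpa [Commute, SemiconjBy, Units.val_mul] using this
  have hSU1 : Commute S (U - 1) := hSU.sub_right (Commute.one_right S)
  have hgm : (g : Matrix (Fin n) (Fin n) ℚ).map (algebraMap ℚ Qbar) = S * U := by
    ext a b
    rw [Matrix.map_apply, ← hg, Units.val_mul]
  have hn2 : IsNilpotent (Matrix.toLinAlgEquiv' (S * (U - 1))) := by
    apply IsNilpotent.map (r := S * (U - 1)) ?_ Matrix.toLinAlgEquiv'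
    exact ⟨n, by rw [hSU1.mul_pow, hu, mul_zero]⟩
  have huniq := Module.End.isNilpotent_isSemisimple_unique (hnil.map φ) hss' hn2
    (semisimple_of_diag s P dv hs) (hcomm0.map φ)
    (by
      have : Commute (S * (U - 1)) S := (Commute.refl S).mul_left hSU1.symm
      exact this.map (Matrix.toLinAlgEquiv' (R := Qbar) (n := Fin n)))
    (by
      rw [← map_add, ← hf, hφ, hgm]
      have : S * U = S * (U - 1) + S := by rw [mul_sub, mul_one, sub_add_cancel]
      rw [this, map_add]
      rfl)
  have hs0m : (Matrix.toLinAlgEquiv' (R := ℚ)).symm s0 =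
    (Matrix.toLinAlgEquiv' (R := ℚ) (n := Fin n)).symm s0 := rfl
  set R := (Matrix.toLinAlgEquiv' (R := ℚ) (n := Fin n)).symm s0 with hR
  have hRS : R.map (algebraMap ℚ Qbar) = S := by
    have h1 := huniq.2
    have h2 : s0 = Matrix.toLinAlgEquiv' R := by rw [hR, AlgEquiv.apply_symm_apply]
    rw [h2, hφ] at h1
    exact Matrix.toLin'.injective h1
  have hdet : R.det ≠ 0 := by
    intro h
    have h1 : S.det ≠ 0 := ((Matrix.isUnit_iff_isUnit_det _).1 s.isUnit).ne_zero
    apply h1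
    rw [← hRS]
    have := (algebraMap ℚ Qbar).map_det R
    rw [RingHom.mapMatrix_apply] at this
    rw [← this, h, map_zero]
  refine ⟨Matrix.GeneralLinearGroup.mkOfDetNeZero R hdet, ?_⟩
  apply Units.ext
  exact hRS

theorem descent {σ : Type} (Y : Set (σ → Qbar))
    (hY : ∀ y ∈ Y, ∀ i, ∃ q : ℚ, y i = algebraMap ℚ Qbar q) (d : ℕ)
    (hclos : ∀ a : σ → Qbar, (∀ f : MvPolynomial σ Qbar, f.totalDegree ≤ d →
      (∀ y ∈ Y, MvPolynomial.eval y f = 0) → MvPolynomial.eval a f = 0) → a ∈ zariskiClosure Y) :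
    BoundedOverQ (zariskiClosure Y) d := by
  classical
  refine ⟨{f | (f.totalDegree ≤ d ∧ ∀ m, f.coeff m ∈ Set.range (algebraMap ℚ Qbar)) ∧
    ∀ y ∈ Y, MvPolynomial.eval y f = 0}, ?_, fun f hf => hf.1⟩
  apply Set.Subset.antisymm
  · intro a ha f hf
    exact ha f hf.2
  · intro a ha
    apply hclos
    intro f hfd hfY
    let b := Module.Basis.ofVectorSpace ℚ Qbar
    let F : (Module.Basis.ofVectorSpaceIndex ℚ Qbar) → MvPolynomial σ ℚ := fun k =>
      ∑ m ∈ f.support, MvPolynomial.monomial m (b.repr (f.coeff m) k)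
    have hev : ∀ (y : σ → Qbar) k, MvPolynomial.eval y (MvPolynomial.map (algebraMap ℚ Qbar) (F k))
        = ∑ m ∈ f.support, algebraMap ℚ Qbar (b.repr (f.coeff m) k) *
          ∏ i ∈ m.support, y i ^ m i := by
      intro y k
      simp only [F, map_sum, MvPolynomial.map_monomial, MvPolynomial.eval_monomial]
      rfl
    have hF : ∀ k, MvPolynomial.eval a (MvPolynomial.map (algebraMap ℚ Qbar) (F k)) = 0 := by
      intro k
      apply ha
      refine ⟨⟨?_, ?_⟩, ?_⟩
      · refine (Finset.sup_mono (MvPolynomial.support_map_subset _ _)).trans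
          (?_ : (F k).totalDegree ≤ d)
        apply MvPolynomial.totalDegree_finsetSum_le
        intro m hm
        refine (MvPolynomial.totalDegree_monomial_le _ _).trans ?_
        exact (MvPolynomial.le_totalDegree hm).trans hfd
      · intro m
        rw [MvPolynomial.coeff_map]
        exact ⟨_, rfl⟩
      · intro y hy
        choose q hq using hY y hy
        have h1 := hfY y hy
        rw [MvPolynomial.eval_eq] at h1
        have h2 : ∀ m : σ →₀ ℕ, ∏ i ∈ m.support, y i ^ m i
            = algebraMap ℚ Qbar (∏ i ∈ m.support, q i ^ m i) := by
          intro m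
          rw [map_prod]
          refine Finset.prod_congr rfl fun i _ => ?_
          rw [map_pow, hq]
        rw [hev]
        simp only [h2] at h1 ⊢
        have h3 := congrArg (fun x => b.repr x k) h1
        simp only [map_sum, map_zero, Finsupp.coe_zero, Pi.zero_apply, Finsupp.finsetSum_apply] at h3
        have h4 : ∀ m : σ →₀ ℕ, b.repr (f.coeff m * algebraMap ℚ Qbar (∏ i ∈ m.support, q i ^ m i)) k
            = b.repr (f.coeff m) k * ∏ i ∈ m.support, q i ^ m i := by
          intro m
          rw [mul_comm, ← Algebra.smul_def, map_smul, Finsupp.smul_apply, smul_eq_mul, mul_comm]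
        simp only [h4] at h3
        have h5 := congrArg (algebraMap ℚ Qbar) h3
        simpa only [map_sum, map_mul, map_zero] using h5
    let T := f.support.biUnion (fun m => (b.repr (f.coeff m)).support)
    have hco : ∀ m ∈ f.support, f.coeff m =
        ∑ k ∈ T, algebraMap ℚ Qbar (b.repr (f.coeff m) k) * b k := by
      intro m hm
      conv_lhs => rw [← b.linearCombination_repr (f.coeff m)]
      rw [Finsupp.linearCombination_apply, Finsupp.sum_of_support_subset (s := T)]
      · refine Finset.sum_congr rfl fun k _ => ?_
        rw [Algebra.smul_def]
      · exact Finset.subset_biUnion_of_mem (fun m => (b.repr (f.coeff m)).support) hm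
      · simp
    rw [MvPolynomial.eval_eq]
    have : ∑ m ∈ f.support, f.coeff m * ∏ i ∈ m.support, a i ^ m i
        = ∑ k ∈ T, b k * MvPolynomial.eval a (MvPolynomial.map (algebraMap ℚ Qbar) (F k)) := by
      simp only [hev, Finset.mul_sum]
      rw [Finset.sum_comm]
      refine Finset.sum_congr rfl fun m hm => ?_
      conv_lhs => rw [hco m hm]
      rw [Finset.sum_mul]
      refine Finset.sum_congr rfl fun k _ => ?_
      ring
    rw [this]
    simp [hF]

theorem glPoint_map_rat {n : ℕ} (r : GL (Fin n) ℚ) (i : glIdx n) :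
    ∃ q : ℚ, glPoint (Matrix.GeneralLinearGroup.map (algebraMap ℚ Qbar) r) i
      = algebraMap ℚ Qbar q := by
  rcases i with p | t
  · exact ⟨(r : Matrix (Fin n) (Fin n) ℚ) p.1 p.2, rfl⟩
  · refine ⟨((r : Matrix (Fin n) (Fin n) ℚ).det)⁻¹, ?_⟩
    rw [map_inv₀, RingHom.map_det]
    rfl

/-- The monomial character attached to a point of the torus. -/
def torusChar {n : ℕ} (x : Fin n → Qbarˣ) : Multiplicative (Fin n → ℤ) →* Qbar where
  toFun m := ((∏ i, x i ^ (Multiplicative.toAdd m i) : Qbarˣ) : Qbar)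
  map_one' := by simp
  map_mul' a b := by
    rw [← Units.val_mul, ← Finset.prod_mul_distrib]
    simp [zpow_add]

/-- The point of affine space attached to the matrix `P * diag x * P⁻¹`. -/
def torusPt {n : ℕ} (P : GL (Fin n) Qbar) (x : Fin n → Qbarˣ) : glIdx n → Qbar :=
  Sum.elim (fun p => ((P : Matrix (Fin n) (Fin n) Qbar) * Matrix.diagonal (fun i => (x i : Qbar)) *
      ((P⁻¹ : GL (Fin n) Qbar) : Matrix (Fin n) (Fin n) Qbar)) p.1 p.2)
    (fun _ => ((∏ i, x i : Qbarˣ)⁻¹ : Qbarˣ))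

/-- The generic torus point, with coordinates Laurent polynomials. -/
def genPt {n : ℕ} (P : GL (Fin n) Qbar) : glIdx n → AddMonoidAlgebra Qbar (Fin n → ℤ) :=
  Sum.elim (fun p => ∑ i, AddMonoidAlgebra.single (Pi.single i 1)
      ((P : Matrix (Fin n) (Fin n) Qbar) p.1 i *
      ((P⁻¹ : GL (Fin n) Qbar) : Matrix (Fin n) (Fin n) Qbar) i p.2))
    (fun _ => AddMonoidAlgebra.single (fun _ => -1) 1)

theorem lift_genPt {n : ℕ} (P : GL (Fin n) Qbar) (x : Fin n → Qbarˣ)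
    (f : MvPolynomial (glIdx n) Qbar) :
    AddMonoidAlgebra.lift Qbar Qbar (Fin n → ℤ) (torusChar x) (MvPolynomial.aeval (genPt P) f)
      = MvPolynomial.eval (torusPt P x) f := by
  have : ((AddMonoidAlgebra.lift Qbar Qbar (Fin n → ℤ) (torusChar x)).comp
      (MvPolynomial.aeval (genPt P))) = MvPolynomial.aeval (torusPt P x) := by
    apply MvPolynomial.algHom_ext
    rintro (p | t)
    · simp only [AlgHom.comp_apply, MvPolynomial.aeval_X, genPt, torusPt, Sum.elim_inl, map_sum,
        AddMonoidAlgebra.lift_single]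
      rw [Matrix.mul_apply]
      refine Finset.sum_congr rfl fun i _ => ?_
      have : torusChar x (Multiplicative.ofAdd (Pi.single i (1 : ℤ))) = x i := by
        simp only [torusChar, MonoidHom.coe_mk, OneHom.coe_mk, toAdd_ofAdd]
        rw [Finset.prod_eq_single i]
        · simp
        · intro j _ hj; simp [hj]
        · simp
      rw [this, Matrix.mul_diagonal, smul_eq_mul]
      ring
    · simp only [AlgHom.comp_apply, MvPolynomial.aeval_X, genPt, torusPt, Sum.elim_inr,
        AddMonoidAlgebra.lift_single, one_smul]
      simp [torusChar]
  have h2 := congrArg (fun φ => φ f) this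
  simpa [MvPolynomial.aeval_eq_eval] using h2

theorem vanish_transfer {n : ℕ} (lam x : Fin n → Qbarˣ)
    (hrel : ∀ r : Fin n → ℤ, ∏ i, lam i ^ r i = 1 → ∏ i, x i ^ r i = 1)
    (F : AddMonoidAlgebra Qbar (Fin n → ℤ))
    (hF : ∀ k : ℤ, AddMonoidAlgebra.lift Qbar Qbar (Fin n → ℤ)
      (torusChar (fun i => lam i ^ k)) F = 0) :
    AddMonoidAlgebra.lift Qbar Qbar (Fin n → ℤ) (torusChar x) F = 0 := by
  classical
  set θ : (Fin n → ℤ) → Qbarˣ := fun m => ∏ i, lam i ^ m i with hθ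
  set T := F.coeff.support.image θ with hT
  have hmaps : ∀ m ∈ F.coeff.support, θ m ∈ T := fun m hm => Finset.mem_image_of_mem θ hm
  let ch : Qbarˣ → (Multiplicative ℤ →* Qbar) := fun t =>
    (Units.coeHom Qbar).comp (zpowersHom Qbarˣ t)
  have hchinj : Function.Injective ch := by
    intro t t' h
    have := congrArg (fun φ : Multiplicative ℤ →* Qbar => φ (Multiplicative.ofAdd 1)) h
    apply Units.ext
    simpa [ch] using this
  have hli : LinearIndependent Qbar (fun t => (ch t : Multiplicative ℤ → Qbar)) :=
    (linearIndependent_monoidHom (Multiplicative ℤ) Qbar).comp ch hchinj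
  have hc : ∀ t ∈ T, ∑ m ∈ F.coeff.support with θ m = t, F.coeff m = 0 := by
    refine linearIndependent_iff'.1 hli T
      (fun t => ∑ m ∈ F.coeff.support with θ m = t, F.coeff m) ?_
    funext k
    have hk := hF (Multiplicative.toAdd k)
    rw [AddMonoidAlgebra.lift_apply, Finsupp.sum,
      ← Finset.sum_fiberwise_of_maps_to hmaps] at hk
    rw [Finset.sum_apply, Pi.zero_apply, ← hk]
    refine Finset.sum_congr rfl fun t _ => ?_
    rw [Pi.smul_apply, smul_eq_mul, Finset.sum_mul]
    refine Finset.sum_congr rfl fun m hm => ?_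
    have hmt : θ m = t := (Finset.mem_filter.1 hm).2
    rw [smul_eq_mul]
    congr 1
    rw [← hmt]
    simp only [ch, torusChar, MonoidHom.coe_mk, OneHom.coe_mk, toAdd_ofAdd, MonoidHom.comp_apply,
      Units.coeHom_apply, zpowersHom_apply, hθ]
    congr 1
    rw [← Finset.prod_zpow]
    refine Finset.prod_congr rfl fun i _ => ?_
    rw [← zpow_mul, ← zpow_mul, mul_comm]
  rw [AddMonoidAlgebra.lift_apply, Finsupp.sum, ← Finset.sum_fiberwise_of_maps_to hmaps]
  refine Finset.sum_eq_zero fun t ht => ?_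
  obtain ⟨m0, -, hm0⟩ := Finset.mem_image.1 ht
  have h1 : ∀ m ∈ F.coeff.support.filter (fun m => θ m = t),
      F.coeff m • torusChar x (Multiplicative.ofAdd m)
        = F.coeff m * torusChar x (Multiplicative.ofAdd m0) := by
    intro m hm
    have hmt : θ m = t := (Finset.mem_filter.1 hm).2
    rw [smul_eq_mul]
    congr 1
    simp only [torusChar, MonoidHom.coe_mk, OneHom.coe_mk, toAdd_ofAdd]
    congr 1
    have h2 := hrel (m - m0) (by
      simp only [Pi.sub_apply, zpow_sub, Finset.prod_mul_distrib, Finset.prod_inv_distrib]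
      rw [mul_inv_eq_one]
      exact hmt.trans hm0.symm)
    simp only [Pi.sub_apply, zpow_sub, Finset.prod_mul_distrib, Finset.prod_inv_distrib] at h2
    rwa [mul_inv_eq_one] at h2
  rw [Finset.sum_congr rfl h1, ← Finset.sum_mul, hc t ht, zero_mul]

theorem glPoint_zpow {n : ℕ} (s P : GL (Fin n) Qbar) (lam : Fin n → Qbarˣ)
    (hs : (s : Matrix (Fin n) (Fin n) Qbar) =
      (P : Matrix (Fin n) (Fin n) Qbar) * Matrix.diagonal (fun i => (lam i : Qbar)) *
      ((P⁻¹ : GL (Fin n) Qbar) : Matrix (Fin n) (Fin n) Qbar)) (k : ℤ) :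
    glPoint (s ^ k) = torusPt P (fun i => lam i ^ k) := by
  let δ : (Fin n → Qbarˣ) →* GL (Fin n) Qbar :=
    { toFun := fun x => ⟨Matrix.diagonal (fun i => (x i : Qbar)),
        Matrix.diagonal (fun i => ((x i)⁻¹ : Qbarˣ)),
        by rw [Matrix.diagonal_mul_diagonal]; simp, by rw [Matrix.diagonal_mul_diagonal]; simp⟩
      map_one' := by apply Units.ext; simp
      map_mul' := fun a b => by
        apply Units.ext
        rw [Units.val_mul]
        simp [Matrix.diagonal_mul_diagonal] }
  have hs' : s = P * δ lam * P⁻¹ := by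
    apply Units.ext
    rw [Units.val_mul, Units.val_mul]
    exact hs
  have hk : s ^ k = P * δ (lam ^ k) * P⁻¹ := by
    rw [hs', conj_zpow, map_zpow]
  have hk' : ((s ^ k : GL (Fin n) Qbar) : Matrix (Fin n) (Fin n) Qbar) =
      (P : Matrix (Fin n) (Fin n) Qbar) * Matrix.diagonal (fun i => ((lam i ^ k : Qbarˣ) : Qbar)) *
      ((P⁻¹ : GL (Fin n) Qbar) : Matrix (Fin n) (Fin n) Qbar) := by
    rw [hk, Units.val_mul, Units.val_mul]
    rfl
  funext i
  rcases i with p | t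
  · simp only [glPoint, torusPt, Sum.elim_inl, hk']
  · simp only [glPoint, torusPt, Sum.elim_inr]
    rw [hk', Matrix.det_mul, Matrix.det_mul, mul_right_comm, ← Matrix.det_mul, ← Units.val_mul,
      mul_inv_cancel, Units.val_one, Matrix.det_one, one_mul, Matrix.det_diagonal]
    rw [Units.val_inv_eq_inv_val, Units.coe_prod]

/-- The linear form giving an entry of the conjugated matrix. -/
def conjForm {n : ℕ} (P : GL (Fin n) Qbar) (i j : Fin n) : MvPolynomial (glIdx n) Qbar :=
  ∑ k, ∑ l, MvPolynomial.C (((P⁻¹ : GL (Fin n) Qbar) : Matrix (Fin n) (Fin n) Qbar) i k *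
    (P : Matrix (Fin n) (Fin n) Qbar) l j) * MvPolynomial.X (Sum.inl (k, l))

theorem totalDegree_conjForm {n : ℕ} (P : GL (Fin n) Qbar) (i j : Fin n) :
    (conjForm P i j).totalDegree ≤ 1 := by
  refine MvPolynomial.totalDegree_finsetSum_le fun k _ => ?_
  refine MvPolynomial.totalDegree_finsetSum_le fun l _ => ?_
  refine (MvPolynomial.totalDegree_mul _ _).trans ?_
  rw [MvPolynomial.totalDegree_C, MvPolynomial.totalDegree_X]

theorem eval_conjForm {n : ℕ} (P : GL (Fin n) Qbar) (i j : Fin n) (a : glIdx n → Qbar) :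
    MvPolynomial.eval a (conjForm P i j) =
      (((P⁻¹ : GL (Fin n) Qbar) : Matrix (Fin n) (Fin n) Qbar) * pointMatrix a *
        (P : Matrix (Fin n) (Fin n) Qbar)) i j := by
  simp only [conjForm, map_sum, map_mul, MvPolynomial.eval_C, MvPolynomial.eval_X]
  rw [Matrix.mul_apply]
  simp only [Matrix.mul_apply, Finset.sum_mul]
  rw [Finset.sum_comm]
  refine Finset.sum_congr rfl fun l _ => Finset.sum_congr rfl fun k _ => ?_
  simp only [pointMatrix, Matrix.of_apply]
  ring

theorem eval_conjForm_torusPt {n : ℕ} (P : GL (Fin n) Qbar) (i j : Fin n) (x : Fin n → Qbarˣ) :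
    MvPolynomial.eval (torusPt P x) (conjForm P i j) = if i = j then (x i : Qbar) else 0 := by
  have hPP : ((P⁻¹ : GL (Fin n) Qbar) : Matrix (Fin n) (Fin n) Qbar) *
      (P : Matrix (Fin n) (Fin n) Qbar) = 1 := by
    rw [← Units.val_mul]; simp
  have h1 : pointMatrix (torusPt P x) = (P : Matrix (Fin n) (Fin n) Qbar) *
      Matrix.diagonal (fun i => (x i : Qbar)) *
      ((P⁻¹ : GL (Fin n) Qbar) : Matrix (Fin n) (Fin n) Qbar) := by
    ext a b
    rfl
  rw [eval_conjForm, h1, Matrix.mul_assoc, Matrix.mul_assoc, hPP, Matrix.mul_one,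
    ← Matrix.mul_assoc, hPP, Matrix.one_mul, Matrix.diagonal_apply]

theorem zpow_toNat (x : Qbarˣ) (m : ℤ) : x ^ m = x ^ m.toNat * (x ^ (-m).toNat)⁻¹ := by
  have : m = (m.toNat : ℤ) - ((-m).toNat : ℤ) := by omega
  conv_lhs => rw [this, zpow_sub, zpow_natCast, zpow_natCast]

theorem closure_char {n : ℕ} (s P : GL (Fin n) Qbar) (lam : Fin n → Qbarˣ)
    (hs : (s : Matrix (Fin n) (Fin n) Qbar) =
      (P : Matrix (Fin n) (Fin n) Qbar) * Matrix.diagonal (fun i => (lam i : Qbar)) *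
      ((P⁻¹ : GL (Fin n) Qbar) : Matrix (Fin n) (Fin n) Qbar)) {N d : ℕ}
    (hgen : ∀ r : Fin n → ℤ, ∏ i, lam i ^ r i = 1 → r ∈ AddSubgroup.closure
      {r : Fin n → ℤ | ∏ i, lam i ^ r i = 1 ∧ ∀ i, (r i).natAbs ≤ N})
    (hd1 : n + 1 ≤ d) (hd2 : n * N ≤ d) (a : glIdx n → Qbar)
    (ha : ∀ f : MvPolynomial (glIdx n) Qbar, f.totalDegree ≤ d →
      (∀ y ∈ glPoint '' (Subgroup.closure {s} : Set (GL (Fin n) Qbar)), MvPolynomial.eval y f = 0) →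
      MvPolynomial.eval a f = 0) :
    a ∈ zariskiClosure (glPoint '' (Subgroup.closure {s} : Set (GL (Fin n) Qbar))) := by
  have hY : ∀ f : MvPolynomial (glIdx n) Qbar,
      (∀ y ∈ glPoint '' (Subgroup.closure {s} : Set (GL (Fin n) Qbar)), MvPolynomial.eval y f = 0) ↔
      ∀ k : ℤ, MvPolynomial.eval (torusPt P (fun i => lam i ^ k)) f = 0 := by
    intro f
    constructor
    · intro h k
      rw [← glPoint_zpow s P lam hs k]
      exact h _ ⟨s ^ k, Subgroup.zpow_mem _ (Subgroup.mem_closure_singleton_self s) k, rfl⟩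
    · rintro h y ⟨t, ht, rfl⟩
      obtain ⟨k, rfl⟩ := Subgroup.mem_closure_singleton.1 ht
      rw [glPoint_zpow s P lam hs k]
      exact h k
  simp only [hY] at ha
  have hPP' : (P : Matrix (Fin n) (Fin n) Qbar) *
      ((P⁻¹ : GL (Fin n) Qbar) : Matrix (Fin n) (Fin n) Qbar) = 1 := by
    rw [← Units.val_mul]; simp
  set x0 : Fin n → Qbar := fun i => MvPolynomial.eval a (conjForm P i i) with hx0
  have hoff : ∀ i j, i ≠ j → MvPolynomial.eval a (conjForm P i j) = 0 := by
    intro i j hij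
    apply ha _ ((totalDegree_conjForm P i j).trans (by omega))
    intro k
    rw [eval_conjForm_torusPt, if_neg hij]
  have hdiag : ((P⁻¹ : GL (Fin n) Qbar) : Matrix (Fin n) (Fin n) Qbar) * pointMatrix a *
        (P : Matrix (Fin n) (Fin n) Qbar) = Matrix.diagonal x0 := by
    ext i j
    rw [← eval_conjForm, Matrix.diagonal_apply]
    split_ifs with h
    · subst h; rfl
    · exact hoff i j h
  have hM : pointMatrix a = (P : Matrix (Fin n) (Fin n) Qbar) * Matrix.diagonal x0 *
      ((P⁻¹ : GL (Fin n) Qbar) : Matrix (Fin n) (Fin n) Qbar) := by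
    rw [← hdiag, Matrix.mul_assoc, Matrix.mul_assoc, hPP', Matrix.mul_one, ← Matrix.mul_assoc,
      hPP', Matrix.one_mul]
  have hy : a (Sum.inr ()) * ∏ i, x0 i = 1 := by
    have := ha (MvPolynomial.X (Sum.inr ()) * ∏ i, conjForm P i i - 1) (by
      refine (MvPolynomial.totalDegree_sub _ _).trans (max_le ?_ (by simp))
      refine (MvPolynomial.totalDegree_mul _ _).trans ?_
      have h1 := MvPolynomial.totalDegree_finsetProd Finset.univ (fun i => conjForm P i i)
      have h2 : ∑ i : Fin n, (conjForm P i i).totalDegree ≤ ∑ i : Fin n, 1 :=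
        Finset.sum_le_sum fun i _ => totalDegree_conjForm P i i
      rw [Finset.sum_const, Finset.card_univ, Fintype.card_fin, smul_eq_mul, mul_one] at h2
      rw [MvPolynomial.totalDegree_X]
      omega) (by
      intro k
      simp only [map_sub, map_mul, map_prod, MvPolynomial.eval_X, eval_conjForm_torusPt, map_one,
        if_true]
      simp only [torusPt, Sum.elim_inr]
      rw [← Units.coe_prod, ← Units.val_mul]
      simp)
    simp only [map_sub, map_mul, map_prod, MvPolynomial.eval_X, map_one] at this
    exact sub_eq_zero.1 this
  have hx0ne : ∀ i, x0 i ≠ 0 := by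
    intro i h
    rw [Finset.prod_eq_zero (Finset.mem_univ i) h, mul_zero] at hy
    exact zero_ne_one hy
  set x : Fin n → Qbarˣ := fun i => Units.mk0 (x0 i) (hx0ne i) with hx
  have hpt : a = torusPt P x := by
    funext i
    rcases i with p | t
    · have := congrFun (congrFun hM p.1) p.2
      simpa [torusPt, pointMatrix, hx] using this
    · simp only [torusPt, Sum.elim_inr]
      rw [Units.val_inv_eq_inv_val, Units.coe_prod]
      exact eq_inv_of_mul_eq_one_left hy
  have hshort : ∀ r : Fin n → ℤ, ∏ i, lam i ^ r i = 1 → (∀ i, (r i).natAbs ≤ N) →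
      ∏ i, x i ^ r i = 1 := by
    intro r hr hrN
    have hdegb : ∀ e : Fin n → ℕ, (∀ i, e i ≤ N) →
        (∏ i, conjForm P i i ^ e i).totalDegree ≤ d := by
      intro e he
      refine (MvPolynomial.totalDegree_finsetProd _ _).trans ?_
      have h2 : ∑ i : Fin n, (conjForm P i i ^ e i).totalDegree ≤ ∑ i : Fin n, N := by
        refine Finset.sum_le_sum fun i _ => (MvPolynomial.totalDegree_pow _ _).trans ?_
        have := totalDegree_conjForm P i i
        have := he i
        nlinarith
      rw [Finset.sum_const, Finset.card_univ, Fintype.card_fin, smul_eq_mul] at h2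
      exact h2.trans hd2
    have hrel : ∀ z : Fin n → Qbarˣ, ∏ i, z i ^ r i = 1 ↔
        ∏ i, z i ^ (r i).toNat = ∏ i, z i ^ (-r i).toNat := by
      intro z
      simp only [zpow_toNat, Finset.prod_mul_distrib, Finset.prod_inv_distrib]
      rw [mul_inv_eq_one]
    have := ha (∏ i, conjForm P i i ^ (r i).toNat - ∏ i, conjForm P i i ^ (-r i).toNat) (by
      refine (MvPolynomial.totalDegree_sub _ _).trans (max_le (hdegb _ ?_) (hdegb _ ?_))
      · intro i; have := hrN i; omega
      · intro i; have := hrN i; omega) (by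
      intro k
      simp only [map_sub, map_pow, map_prod, eval_conjForm_torusPt, if_true]
      rw [sub_eq_zero]
      have h3 : ∏ i, (lam i ^ k) ^ r i = 1 := by
        have : ∀ i, (lam i ^ k) ^ r i = (lam i ^ r i) ^ k := fun i => by
          rw [← zpow_mul, ← zpow_mul, mul_comm]
        simp only [this]
        rw [Finset.prod_zpow, hr, one_zpow]
      have h4 := congrArg (fun z : Qbarˣ => (z : Qbar)) ((hrel _).1 h3)
      simpa only [Units.coe_prod, Units.val_pow_eq_pow_val] using h4)
    rw [hrel]
    apply Units.ext
    simp only [map_sub, map_pow, map_prod] at this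
    simpa only [Units.coe_prod, Units.val_pow_eq_pow_val, hx, Units.val_mk0] using sub_eq_zero.1 this
  have hall : ∀ r : Fin n → ℤ, ∏ i, lam i ^ r i = 1 → ∏ i, x i ^ r i = 1 := by
    intro r hr
    refine AddSubgroup.closure_induction (p := fun r _ => ∏ i, x i ^ r i = 1) ?_ ?_ ?_ ?_ (hgen r hr)
    · intro r hr
      exact hshort r hr.1 hr.2
    · simp
    · intro p q _ _ hp hq
      simp only [Pi.add_apply, zpow_add, Finset.prod_mul_distrib]
      rw [hp, hq, one_mul]
    · intro p _ hp
      simp only [Pi.neg_apply, zpow_neg, Finset.prod_inv_distrib]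
      rw [hp, inv_one]
  intro f hf
  have hf' := (hY f).1 hf
  rw [hpt, ← lift_genPt]
  apply vanish_transfer lam x hall
  intro k
  rw [lift_genPt]
  exact hf' k

/-- **Degree bound for the closure of the cyclic group of the semisimple part**: there
is an absolute constant `c` such that for all `n ≥ 1` and all `g ∈ GL_n(ℚ)` with entries
of height at most `h ≥ 2`, if `g = s·u = u·s` is its multiplicative Jordan–Chevalley
decomposition with `s` semisimple and `u` unipotent, then `Zcl(⟨s⟩)` is `d`-bounded over
`ℚ` for `d = n·⌈(c·n⁷·n!·log₂ h)^n⌉`. -/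
theorem stmt15 :
    ∃ c : ℕ, ∀ n : ℕ, 1 ≤ n → ∀ h : ℕ, 2 ≤ h → ∀ g : GL (Fin n) ℚ,
      (∀ i j, ratHeight ((g : Matrix (Fin n) (Fin n) ℚ) i j) ≤ h) →
      ∀ s u : GL (Fin n) Qbar,
      (∀ i j, ((s * u : GL (Fin n) Qbar) : Matrix (Fin n) (Fin n) Qbar) i j =
        algebraMap ℚ Qbar ((g : Matrix (Fin n) (Fin n) ℚ) i j)) →
      s * u = u * s →
      IsSemisimpleMat (s : Matrix (Fin n) (Fin n) Qbar) →
      IsUnipotent u →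
      BoundedOverQ
        (zariskiClosure (glPoint '' (Subgroup.closure {s} : Set (GL (Fin n) Qbar))))
        (n * ⌈((c : ℝ) * n ^ 7 * n.factorial * Real.logb 2 h) ^ n⌉₊) := by
  refine ⟨384, ?_⟩
  intro n hn h hh g hg s u hsu hc hss hu
  obtain ⟨P, dv, hs⟩ := hss
  set l := Nat.log 2 h + 1 with hl
  have hl1 : 1 ≤ l := by omega
  have hg' : ∀ i j, ratHeight ((g : Matrix (Fin n) (Fin n) ℚ) i j) ≤ 2 ^ l := fun i j =>
    (hg i j).trans (Nat.lt_pow_succ_log_self (by norm_num) h).le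
  have h0 : ∀ j, dv j ≠ 0 := dv_ne_zero s P dv hs
  have hroot := eig_root g s u P dv hsu hc hs hu
  obtain ⟨N, hN⟩ : ∃ N : ℕ,
    N = (64 * n ^ 5 * n.factorial * l) ^ n * (2 * n.factorial ^ 2) + 1 := ⟨_, rfl⟩
  have hnum := numerics hn hh hl hN
  have hN2 : 2 ≤ N := by
    have h1 : 0 < (64 * n ^ 5 * n.factorial * l) ^ n * (2 * n.factorial ^ 2) := by
      have := n.factorial_pos
      positivity
    omega
  obtain ⟨r, hr⟩ := s_rational g s u P dv hsu hc hs hu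
  have hlam : ∀ m : Fin n → ℤ, (∏ i, (Units.mk0 (dv i) (h0 i)) ^ m i = 1) ↔
      ∏ i, dv i ^ m i = 1 := by
    intro m
    rw [Units.ext_iff]
    simp only [Units.coe_prod, Units.val_zpow_eq_zpow_val, Units.val_mk0, Units.val_one]
  apply descent
  · rintro y ⟨t, ht, rfl⟩ i
    obtain ⟨k, rfl⟩ := Subgroup.mem_closure_singleton.1 ht
    rw [← hr, ← map_zpow]
    exact glPoint_map_rat _ i
  · intro a ha
    refine closure_char s P (fun i => Units.mk0 (dv i) (h0 i)) hs (N := N) ?_ ?_ ?_ a ha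
    · simp only [hlam]
      exact fun m hm => relations_generated hn hl1 g hg' dv h0 hroot hN m hm
    · have := hN2.trans hnum
      nlinarith
    · exact Nat.mul_le_mul_left _ hnum
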